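/- arXiv:2305.14407 — 13 statements merged into one kernel-verified Lean document; each statement's English description precedes it below -/
import Mathlib

section
/- For every ε > 0 and every natural number m₀, there exists M : ℕ such that every finite simple graph G admits a partition P of its vertex set into at most M parts which is ε-regular, i.e. the sum of |X|·|Y| over all pairs (X,Y) of distinct parts of P that are not ε-regular is at most ε·|V(G)|². -/
/-!
Mathlib's `szemeredi_regularity` produces, for `δ = ε / 4`, an equipartition of bounded size in
which the *number* of non-`δ`-uniform pairs is a `δ`-fraction of all pairs. Parts of an
equipartition have nearly equal size, so
`Finpartition.IsEquipartition.sum_nonUniforms_lt'` converts this into the weighted bound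
`δ * (|V| + |P|) ^ 2 ≤ 4 * δ * |V| ^ 2 = ε * |V| ^ 2`. The notions of regularity of a pair differ
only by strict inequality versus `≤` and by the parameter, and a `δ`-uniform pair is `ε`-regular
since `δ ≤ ε`.
-/

open Finset
open scoped Classical

/-- A pair `(X, Y)` of finite vertex sets is `ε`-regular in `G` if for all `A ⊆ X` and
`B ⊆ Y` with `|A| ≥ ε·|X|` and `|B| ≥ ε·|Y|`, we have `|d(A,B) − d(X,Y)| ≤ ε`. -/
def IsRegularPair {V : Type*} (G : SimpleGraph V) [DecidableRel G.Adj] (ε : ℝ)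
    (X Y : Finset V) : Prop :=
  ∀ A ⊆ X, ∀ B ⊆ Y, ε * #X ≤ #A → ε * #Y ≤ #B →
    |(G.edgeDensity A B : ℝ) - (G.edgeDensity X Y : ℝ)| ≤ ε

/-- **Szemerédi's regularity lemma**: for every `ε > 0` and `m₀`, there is `M ≥ m₀` such that
every finite simple graph admits a partition of its vertex set into at most `M` parts such that
the sum of `|X|·|Y|` over irregular pairs of distinct parts is at most `ε·|V(G)|²`. -/
theorem szemeredi_regularity_lemma (ε : ℝ) (hε : 0 < ε) (m₀ : ℕ) :
    ∃ M : ℕ, m₀ ≤ M ∧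
      ∀ (V : Type) [Fintype V] [DecidableEq V] (G : SimpleGraph V) [DecidableRel G.Adj],
        ∃ P : Finpartition (univ : Finset V), #P.parts ≤ M ∧
          ∑ XY ∈ {XY ∈ P.parts ×ˢ P.parts | XY.1 ≠ XY.2 ∧ ¬ IsRegularPair G ε XY.1 XY.2},
            ((#XY.1 : ℝ) * #XY.2) ≤ ε * (Fintype.card V) ^ 2 := by
  refine ⟨max m₀ (SzemerediRegularity.bound (ε / 4) 0), le_max_left _ _, ?_⟩
  intro V _ _ G _
  obtain ⟨P, hequi, -, hcard, hunif⟩ :=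
    szemeredi_regularity G (ε := ε / 4) (l := 0) (by positivity) (Nat.zero_le _)
  refine ⟨P, hcard.trans (le_max_right _ _), ?_⟩
  have hsub : {XY ∈ P.parts ×ˢ P.parts | XY.1 ≠ XY.2 ∧ ¬ IsRegularPair G ε XY.1 XY.2} ⊆
      P.nonUniforms G (ε / 4) := by
    rintro ⟨X, Y⟩ h
    simp only [mem_filter, mem_product] at h
    obtain ⟨⟨hX, hY⟩, hne, hreg⟩ := h
    refine (P.mk_mem_nonUniforms G).2 ⟨hX, hY, hne, fun hu => hreg ?_⟩
    intro A hA B hB hAX hBY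
    exact (hu.mono (by linarith : ε / 4 ≤ ε) hA hB (by rwa [mul_comm]) (by rwa [mul_comm])).le
  refine (sum_le_sum_of_subset_of_nonneg hsub fun _ _ _ => by positivity).trans ?_
  -- The weighted bound needs a vertex; without one there are no parts and the sum is empty.
  obtain hV | hV := (univ : Finset V).eq_empty_or_nonempty
  · have hparts : P.parts = ∅ := by
      have := P.card_parts_le_card
      exact card_eq_zero.1 (Nat.le_zero.1 (this.trans_eq (card_eq_zero.2 hV)))
    have : P.nonUniforms G (ε / 4) = ∅ := by simp [Finpartition.nonUniforms, hparts]
    rw [this, sum_empty]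
    positivity
  · calc ∑ XY ∈ P.nonUniforms G (ε / 4), ((#XY.1 : ℝ) * #XY.2)
        ≤ ε / 4 * (#(univ : Finset V) + #P.parts) ^ 2 :=
          (hequi.sum_nonUniforms_lt' hV (by positivity) hunif).le
      _ ≤ ε / 4 * (#(univ : Finset V) + #(univ : Finset V)) ^ 2 := by
          gcongr
          exact P.card_parts_le_card
      _ = ε * (Fintype.card V) ^ 2 := by
          rw [card_univ]
          ring
end

section
/- For every δ > 0 there exists N₀ : ℕ such that for all N ≥ N₀, every set A ⊆ {1, …, N} with |A| ≥ δ·N contains a nontrivial three-term arithmetic progression, i.e. there exist k and d > 0 with k, k+d, k+2d ∈ A. -/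
/-! The density form of Roth's theorem, deduced from Mathlib's `roth_3ap_theorem_nat`, which rests on
the corners theorem and hence on triangle removal. That result says that dense subsets of `range n`
are not `ThreeAPFree`, so contain `a`, `b`, `c` with `a + c = b + b` and `a ≠ b`. -/

open Finset

/-- **Roth's theorem on arithmetic progressions**: for every `δ > 0` there is `N₀` such that
for all `N ≥ N₀`, every `A ⊆ {1, …, N}` with `|A| ≥ δ·N` contains a nontrivial three-term
arithmetic progression. -/
theorem roth_theorem_on_arithmetic_progressions (δ : ℝ) (hδ : 0 < δ) :
    ∃ N₀ : ℕ, ∀ N : ℕ, N₀ ≤ N → ∀ A ⊆ Finset.Icc 1 N, δ * N ≤ #A →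
      ∃ k d : ℕ, 0 < d ∧ k ∈ A ∧ k + d ∈ A ∧ k + 2 * d ∈ A := by
  -- The interval `{1, …, N}` sits inside `range (N + 1)`; halving the density absorbs the extra
  -- point as soon as `1 ≤ N`.
  refine ⟨cornersTheoremBound (δ / 2 / 3) + 1, fun N hN A hA hcard ↦ ?_⟩
  have hN1 : (1 : ℝ) ≤ N := by exact_mod_cast (by omega : 1 ≤ N)
  have hsub : A ⊆ range (N + 1) := fun x hx ↦ by
    have := mem_Icc.1 (hA hx)
    exact mem_range.2 (by omega)
  have hfree := roth_3ap_theorem_nat (n := N + 1) (δ / 2) (by positivity) (by omega) A hsub (by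
    push_cast
    nlinarith)
  simp only [ThreeAPFree, mem_coe, not_forall] at hfree
  obtain ⟨a, ha, b, hb, c, hc, habc, hne⟩ := hfree
  -- The solution of `a + c = 2 * b` is unordered: start from the smaller endpoint.
  rcases lt_or_gt_of_ne hne with h | h
  · refine ⟨a, b - a, by omega, ha, ?_, ?_⟩
    · rwa [show a + (b - a) = b by omega]
    · rwa [show a + 2 * (b - a) = c by omega]
  · refine ⟨c, b - c, by omega, hc, ?_, ?_⟩
    · rwa [show c + (b - c) = b by omega]
    · rwa [show c + 2 * (b - c) = a by omega]
end

section
/- Let G be a commutative group, A and B finite nonempty subsets of G, and K a real number with |A + B| ≤ K·|A|. Then for all natural numbers m and n, |mB − nB| ≤ K^(m+n)·|A|. -/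
open Finset
open scoped Pointwise

/-- **The Plünnecke–Ruzsa inequality**: if `A`, `B` are finite nonempty subsets of a commutative
group with `|A + B| ≤ K·|A|`, then `|mB − nB| ≤ K^(m+n)·|A|` for all naturals `m`, `n`. -/
theorem pluennecke_ruzsa_inequality {G : Type*} [AddCommGroup G] [DecidableEq G]
    (A B : Finset G) (hA : A.Nonempty) (hB : B.Nonempty) (K : ℝ)
    (hK : (#(A + B) : ℝ) ≤ K * #A) (m n : ℕ) :
    (#(m • B - n • B) : ℝ) ≤ K ^ (m + n) * #A := by
  -- Mathlib has the inequality in `ℚ≥0`, for the exact doubling constant `#(A + B) / #A`.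
  have h : (#(m • B - n • B) : ℝ) ≤ ((#(A + B) : ℝ) / #A) ^ (m + n) * #A := by
    have hq := (NNRat.cast_le (K := ℝ)).2
      (pluennecke_ruzsa_inequality_nsmul_sub_nsmul_add hA B m n)
    push_cast at hq
    exact hq
  have hA0 : (0 : ℝ) < #A := by exact_mod_cast hA.card_pos
  refine h.trans ?_
  gcongr
  exact (div_le_iff₀ hA0).2 hK
end

section
/- Let G be a commutative group and A a finite nonempty subset of G. Then there exist a natural number N and a polynomial p with rational coefficients such that for all n ≥ N, the cardinality of the n-fold sumset nA equals p(n). -/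
open Finset
open scoped Pointwise

/-!
Write `A = {a₀, …, a_{k-1}}` and let `φ x = ∑ i, x i • aᵢ` for `x : Fin k → ℕ`, so that `n • A` is
the image under `φ` of the tuples of degree `∑ i, x i = n`. Choose in each fibre of `φ` of a given
degree the lexicographically least tuple. As the lexicographic order is invariant under addition,
the set `L` of chosen tuples is a lower set for the coordinatewise order
(`isLowerSet_lexLeast`), and `|n • A|` is the number of elements of `L` of degree `n`.

It remains to see that the number of degree `n` elements of any lower set `L` of `ℕ^k` is
eventually polynomial in `n` (`eventuallyPoly_degreeCount`), which goes by induction on `k`.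
The slices `L_j = {y | (j, y) ∈ L}` form a decreasing sequence of lower sets of `ℕ^(k-1)`, which
is eventually constant, equal to `L_J`, by Dickson's lemma. The count for `L` is then a sum of `J`
shifts of eventually polynomial functions and a (shifted) partial sum of the count for `L_J`; and
partial sums of eventually polynomial functions are eventually polynomial by Faulhaber's formula.
-/

namespace Khovanskii

/-- A function `ℕ → ℕ` that agrees with a polynomial over `ℚ` at all large arguments. -/
def EventuallyPoly (f : ℕ → ℕ) : Prop :=
  ∃ (N : ℕ) (p : Polynomial ℚ), ∀ n : ℕ, N ≤ n → (f n : ℚ) = p.eval (n : ℚ)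

lemma EventuallyPoly.congr {f g : ℕ → ℕ} (hf : EventuallyPoly f) (M : ℕ)
    (h : ∀ n, M ≤ n → g n = f n) : EventuallyPoly g := by
  obtain ⟨N, p, hp⟩ := hf
  refine ⟨max N M, p, fun n hn => ?_⟩
  rw [h n (le_of_max_le_right hn), hp n (le_of_max_le_left hn)]

lemma EventuallyPoly.add {f g : ℕ → ℕ} (hf : EventuallyPoly f) (hg : EventuallyPoly g) :
    EventuallyPoly fun n => f n + g n := by
  obtain ⟨N, p, hp⟩ := hf
  obtain ⟨M, q, hq⟩ := hg
  refine ⟨max N M, p + q, fun n hn => ?_⟩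
  simp [hp n (le_of_max_le_left hn), hq n (le_of_max_le_right hn)]

lemma eventuallyPoly_const (c : ℕ) : EventuallyPoly fun _ => c :=
  ⟨0, Polynomial.C (c : ℚ), fun n _ => by simp⟩

lemma EventuallyPoly.sum {ι : Type*} (s : Finset ι) {f : ι → ℕ → ℕ}
    (hf : ∀ i ∈ s, EventuallyPoly (f i)) : EventuallyPoly fun n => ∑ i ∈ s, f i n := by
  classical
  induction s using Finset.induction_on with
  | empty => simpa using eventuallyPoly_const 0
  | insert i s hi ih =>
    simp only [Finset.sum_insert hi]
    exact (hf i (by simp)).add (ih fun j hj => hf j (by simp [hj]))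

lemma EventuallyPoly.shift {f : ℕ → ℕ} (hf : EventuallyPoly f) (j : ℕ) :
    EventuallyPoly fun n => f (n - j) := by
  obtain ⟨N, p, hp⟩ := hf
  refine ⟨N + j, p.comp (Polynomial.X - Polynomial.C (j : ℚ)), fun n hn => ?_⟩
  rw [hp (n - j) (by omega), Nat.cast_sub (by omega)]
  simp

/-- The partial sums of a polynomial are given by a polynomial, by Faulhaber's formula for
monomials. -/
lemma exists_poly_sum_range (p : Polynomial ℚ) :
    ∃ q : Polynomial ℚ, ∀ n : ℕ, ∑ m ∈ range n, p.eval (m : ℚ) = q.eval (n : ℚ) := by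
  induction p using Polynomial.induction_on' with
  | add p q hp hq =>
    obtain ⟨p', hp'⟩ := hp
    obtain ⟨q', hq'⟩ := hq
    exact ⟨p' + q', fun n => by simp [Finset.sum_add_distrib, hp', hq']⟩
  | monomial d c =>
    refine ⟨Polynomial.C c * ∑ i ∈ range (d + 1), Polynomial.C
      (bernoulli i * ((d + 1).choose i) / (d + 1)) * Polynomial.X ^ (d + 1 - i), fun n => ?_⟩
    simp only [Polynomial.eval_monomial, ← Finset.mul_sum, sum_range_pow, Polynomial.eval_mul,
      Polynomial.eval_C, Polynomial.eval_finsetSum, Polynomial.eval_pow, Polynomial.eval_X]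
    congr 1
    exact Finset.sum_congr rfl fun i _ => by ring

lemma EventuallyPoly.sum_range {f : ℕ → ℕ} (hf : EventuallyPoly f) :
    EventuallyPoly fun n => ∑ m ∈ range n, f m := by
  obtain ⟨N, p, hp⟩ := hf
  obtain ⟨q, hq⟩ := exists_poly_sum_range p
  refine ⟨N, q + Polynomial.C (∑ m ∈ range N, ((f m : ℚ) - p.eval (m : ℚ))), fun n hn => ?_⟩
  -- Below `N` the discrepancy between `f` and `p` contributes a constant.
  have h : ∑ m ∈ range n, ((f m : ℚ) - p.eval (m : ℚ))
      = ∑ m ∈ range N, ((f m : ℚ) - p.eval (m : ℚ)) := by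
    symm
    refine Finset.sum_subset (by simpa using hn) fun m _ hm => ?_
    rw [hp m (by simpa using hm), sub_self]
  rw [Polynomial.eval_add, Polynomial.eval_C, ← h, ← hq, Finset.sum_sub_distrib]
  push_cast
  ring

/-- Lower sets of a well-quasi-order satisfy the descending chain condition. -/
lemma exists_stable {α : Type*} [Preorder α] [WellQuasiOrderedLE α] (L : ℕ → Set α)
    (hL : ∀ j, IsLowerSet (L j)) (hanti : Antitone L) : ∃ J, ∀ j, J ≤ j → L j = L J := by
  by_contra! hcon
  have hstep : ∀ j, ∃ j' x, j < j' ∧ x ∈ L j ∧ x ∉ L j' := fun j => by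
    obtain ⟨j', hj, hne⟩ := hcon j
    obtain ⟨x, hx, hx'⟩ := Set.exists_of_ssubset ((hanti hj).ssubset_of_ne hne)
    refine ⟨j', x, lt_of_le_of_ne hj ?_, hx, hx'⟩
    rintro rfl
    exact hx' hx
  choose f x hf hx hx' using hstep
  have hmono : Monotone fun n => f^[n] 0 := monotone_nat_of_le_succ fun n => by
    rw [Function.iterate_succ_apply']
    exact (hf _).le
  obtain ⟨m, n, hmn, hle⟩ := wellQuasiOrdered_le fun n => x (f^[n] 0)
  apply hx' (f^[m] 0)
  rw [← Function.iterate_succ_apply' f m]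
  exact hL _ hle (hanti (hmono hmn) (hx _))

open Classical in
/-- The number of elements of `L ⊆ ℕ^k` with coordinate sum `n`. -/
noncomputable def degreeCount {k : ℕ} (L : Set (Fin k → ℕ)) (n : ℕ) : ℕ :=
  #{x ∈ Nat.antidiagonalTuple k n | x ∈ L}

/-- Count the elements of degree `n` according to their first coordinate. -/
lemma degreeCount_succ {k : ℕ} (L : Set (Fin (k + 1) → ℕ)) (n : ℕ) :
    degreeCount L n = ∑ j ∈ range (n + 1), degreeCount {y | Fin.cons j y ∈ L} (n - j) := by
  classical
  unfold degreeCount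
  rw [Finset.card_eq_sum_card_fiberwise (f := fun x => x 0) (t := range (n + 1))]
  · refine Finset.sum_congr rfl fun j hj => ?_
    have hj' : j ≤ n := by simpa [Nat.lt_succ_iff] using hj
    symm
    refine Finset.card_bij (fun y _ => Fin.cons j y) ?_ ?_ ?_
    · intro y hy
      simp only [mem_filter, Nat.mem_antidiagonalTuple, Set.mem_ofPred_eq] at hy
      simp only [mem_filter, Nat.mem_antidiagonalTuple, Fin.sum_cons, Fin.cons_zero, hy]
      simp only [and_true]
      omega
    · intro y _ z _ h
      exact Fin.cons_right_injective (α := fun _ => ℕ) j h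
    · intro x hx
      simp only [mem_filter, Nat.mem_antidiagonalTuple, Fin.sum_univ_succ] at hx
      obtain ⟨⟨hsum, hxL⟩, h0⟩ := hx
      have hcons : Fin.cons (α := fun _ => ℕ) j (Fin.tail x) = x := by
        rw [← h0]; exact Fin.cons_self_tail x
      refine ⟨Fin.tail x, ?_, hcons⟩
      simp only [mem_filter, Nat.mem_antidiagonalTuple, Set.mem_ofPred_eq, hcons]
      refine ⟨?_, hxL⟩
      simp only [Fin.tail]
      omega
  · intro x hx
    simp only [coe_filter, Nat.mem_antidiagonalTuple, Set.mem_ofPred_eq, Fin.sum_univ_succ] at hx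
    simp only [coe_range, Set.mem_Iio]
    omega

theorem eventuallyPoly_degreeCount {k : ℕ} (L : Set (Fin k → ℕ)) (hL : IsLowerSet L) :
    EventuallyPoly (degreeCount L) := by
  induction k with
  | zero =>
    refine (eventuallyPoly_const 0).congr 1 fun n hn => ?_
    obtain ⟨m, rfl⟩ := Nat.exists_eq_add_of_le' hn
    simp [degreeCount]
  | succ k ih =>
    set S : ℕ → Set (Fin k → ℕ) := fun j => {y | Fin.cons j y ∈ L} with hS
    have hlow : ∀ j, IsLowerSet (S j) := fun j y z hzy hy =>
      hL (Fin.cons_le_cons.2 ⟨le_rfl, hzy⟩) hy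
    have hanti : Antitone S := fun i j hij y hy => hL (Fin.cons_le_cons.2 ⟨hij, le_rfl⟩) hy
    obtain ⟨J, hJ⟩ := exists_stable S hlow hanti
    have hpoly := (EventuallyPoly.sum (range J) fun j _ => (ih (S j) (hlow j)).shift j).add
      (((ih (S J) (hlow J)).sum_range.shift J).add ((ih (S J) (hlow J)).shift J))
    refine hpoly.congr J fun n hn => ?_
    rw [degreeCount_succ, ← Finset.sum_range_add_sum_Ico _ (show J ≤ n + 1 by omega)]
    congr 1
    rw [← Finset.sum_range_succ, Finset.sum_Ico_eq_sum_range, show n + 1 - J = n - J + 1 by omega,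
      ← Finset.sum_range_reflect]
    refine Finset.sum_congr rfl fun m hm => ?_
    have hm' : m < n - J + 1 := by simpa using hm
    have hSm := hJ (J + (n - J + 1 - 1 - m)) (by omega)
    simp only [hS] at hSm
    rw [hSm]
    congr 1
    omega

variable {G : Type*} [AddCommGroup G]

/-- The tuples that are lexicographically least among the tuples `y` of the same degree giving the
same value of `∑ i, y i • a i`. -/
def lexLeast {k : ℕ} (a : Fin k → G) : Set (Fin k → ℕ) :=
  {x | ∀ y : Fin k → ℕ, ∑ i, y i = ∑ i, x i → ∑ i, y i • a i = ∑ i, x i • a i → toLex x ≤ toLex y}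

lemma isLowerSet_lexLeast {k : ℕ} (a : Fin k → G) : IsLowerSet (lexLeast a) := by
  intro x x' hle hx y hdeg hval
  obtain ⟨d, rfl⟩ := exists_add_of_le hle
  -- A competitor `y` of `x'` yields the competitor `y + d` of `x = x' + d`.
  have h := hx (y + d) (by simp [Finset.sum_add_distrib, hdeg])
    (by simp [add_smul, Finset.sum_add_distrib, hval])
  rw [toLex_add, toLex_add] at h
  exact le_of_add_le_add_right h

lemma mem_nsmul_iff [DecidableEq G] {k : ℕ} (a : Fin k → G) (n : ℕ) (g : G) :
    g ∈ n • univ.image a ↔ ∃ x : Fin k → ℕ, ∑ i, x i = n ∧ ∑ i, x i • a i = g := by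
  induction n generalizing g with
  | zero =>
    simp only [zero_smul, mem_zero]
    constructor
    · rintro rfl
      exact ⟨0, by simp, by simp⟩
    · rintro ⟨x, hx, rfl⟩
      simp only [sum_eq_zero_iff, mem_univ, true_imp_iff] at hx
      simp [hx]
  | succ n ih =>
    simp only [succ_nsmul, mem_add, ih, mem_image, mem_univ, true_and]
    constructor
    · rintro ⟨_, ⟨x, hx, rfl⟩, _, ⟨i, rfl⟩, rfl⟩
      refine ⟨x + Pi.single i 1, ?_, ?_⟩
      · simp [Finset.sum_add_distrib, hx]
      · simp [Finset.sum_add_distrib, add_smul, Pi.single_apply, ite_smul]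
    · rintro ⟨x, hx, rfl⟩
      obtain ⟨i, hi⟩ : ∃ i, x i ≠ 0 := by
        by_contra! h
        simp [h] at hx
      have hle : Pi.single i 1 ≤ x := by
        intro j
        by_cases hj : j = i
        · subst hj; simpa using Nat.one_le_iff_ne_zero.2 hi
        · simp [hj]
      obtain ⟨y, rfl⟩ := exists_add_of_le hle
      refine ⟨_, ⟨y, ?_, rfl⟩, _, ⟨i, rfl⟩, ?_⟩
      · simp [Finset.sum_add_distrib] at hx
        omega
      · simp [Finset.sum_add_distrib, add_smul, Pi.single_apply, ite_smul, add_comm]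

lemma card_nsmul_eq [DecidableEq G] {k : ℕ} (a : Fin k → G) (n : ℕ) :
    #(n • univ.image a) = degreeCount (lexLeast a) n := by
  classical
  unfold degreeCount
  symm
  refine Finset.card_bij (fun x _ => ∑ i, x i • a i) ?_ ?_ ?_
  · intro x hx
    simp only [mem_filter, Nat.mem_antidiagonalTuple] at hx
    exact (mem_nsmul_iff a n _).2 ⟨x, hx.1, rfl⟩
  · intro x hx y hy h
    simp only [mem_filter, Nat.mem_antidiagonalTuple] at hx hy
    exact toLex.injective (le_antisymm (hx.2 y (by rw [hx.1, hy.1]) h.symm)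
      (hy.2 x (by rw [hx.1, hy.1]) h))
  · intro g hg
    obtain ⟨x, hx, hxg⟩ := (mem_nsmul_iff a n g).1 hg
    obtain ⟨z, hz, hmin⟩ := Finset.exists_min_image
      {y ∈ Nat.antidiagonalTuple k n | ∑ i, y i • a i = g} toLex
      ⟨x, by simp [Nat.mem_antidiagonalTuple, hx, hxg]⟩
    simp only [mem_filter, Nat.mem_antidiagonalTuple] at hz hmin
    refine ⟨z, ?_, hz.2⟩
    simp only [mem_filter, Nat.mem_antidiagonalTuple]
    exact ⟨hz.1, fun y hy hyg => hmin y ⟨hy.trans hz.1, hyg.trans hz.2⟩⟩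

end Khovanskii

/-- **Khovanskii's theorem**: for a finite nonempty subset `A` of a commutative group, there are
`N : ℕ` and a polynomial `p` over `ℚ` such that `|nA| = p(n)` for all `n ≥ N`. -/
theorem khovanskii_theorem {G : Type*} [AddCommGroup G] [DecidableEq G]
    (A : Finset G) (hA : A.Nonempty) :
    ∃ (N : ℕ) (p : Polynomial ℚ), ∀ n : ℕ, N ≤ n → (#(n • A) : ℚ) = p.eval (n : ℚ) := by
  have himg : univ.image (fun i => (A.equivFin.symm i : G)) = A := by
    ext g
    simp only [mem_image, mem_univ, true_and]
    exact ⟨by rintro ⟨i, rfl⟩; exact (A.equivFin.symm i).2,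
      fun hg => ⟨A.equivFin ⟨g, hg⟩, by simp⟩⟩
  obtain ⟨N, p, hp⟩ := Khovanskii.eventuallyPoly_degreeCount _
    (Khovanskii.isLowerSet_lexLeast fun i => (A.equivFin.symm i : G))
  refine ⟨N, p, fun n hn => ?_⟩
  rw [← hp n hn, ← Khovanskii.card_nsmul_eq, himg]
end

section
/- There exists an absolute constant C > 0 such that for every additive commutative group G, every finite nonempty subset A ⊆ G, and every real K ≥ 1: if the additive energy E(A) satisfies E(A) ≥ |A|³/K, then there exists A' ⊆ A with |A'| ≥ |A|/(C·K^C) and |A' − A'| ≤ C·K^C·|A|. -/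
/-!
The proof follows Schoen's approach. Write `n = |A|` and `A_d = A ∩ (A + d)`, so that `|A_d|`
is the number of representations of `d` as a difference of two elements of `A`, and
`∑_d |A_d| ≤ n²`, `∑_d |A_d|² ≥ E(A) ≥ n³/K`. Call a pair `(a, b)` *bad* if `a - b` has fewer than
`n/(16K)` representations.

* A pair `(a, b) ∈ A²` lies in `A_d × A_d` for at most `|A_{a-b}|` values of `d`. Hence the sets
  `A_d × A_d` contain altogether at most `n³/(16K)` bad pairs. As the `d` with `|A_d| < n/(2K)`
  contribute at most `n³/(2K)` to `∑_d |A_d|²`, some `d` with `|A_d| ≥ n/(2K)` is such that at most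
  one eighth of the pairs in `A_d × A_d` are bad (`exists_popular_shift`).
* Let `A'` consist of the `a ∈ A_d` that form a bad pair with at most a quarter of the `b ∈ A_d`. By
  Markov's inequality `|A'| ≥ |A_d|/2 ≥ n/(4K)`. For `x, y ∈ A'`, at least half of the `b ∈ A_d` are
  such that `x - b` and `y - b` both have at least `n/(16K)` representations. Since
  `x - y = (x - b) - (y - b)`, the element `x - y` has at least `n/(4K) · (n/(16K))²`
  representations as `(a₁ - a₂) - (a₃ - a₄)` with all `aᵢ ∈ A`. There are only `n⁴` quadruples, so
  `|A' - A'| ≤ 1024 K³ n`.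
-/

open Finset
open scoped Pointwise

/-- The set `A ∩ (A + d)`. Its cardinality is the number of representations of `d` as a difference
of two elements of `A`. -/
def shiftInter {G : Type*} [AddCommGroup G] [DecidableEq G] (A : Finset G) (d : G) : Finset G :=
  {a ∈ A | a - d ∈ A}

section

variable {G : Type*} [AddCommGroup G] [DecidableEq G]

lemma mem_shiftInter {A : Finset G} {d a : G} : a ∈ shiftInter A d ↔ a ∈ A ∧ a - d ∈ A := by
  simp [shiftInter]

lemma sum_card_shiftInter_le (A D : Finset G) : ∑ d ∈ D, #(shiftInter A d) ≤ #A ^ 2 := by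
  have h : ∑ d ∈ D, #(shiftInter A d) = ∑ a ∈ A, #{d ∈ D | a - d ∈ A} :=
    sum_card_bipartiteAbove_eq_sum_card_bipartiteBelow (fun d a ↦ a - d ∈ A)
  rw [h, sq, ← smul_eq_mul]
  refine sum_le_card_nsmul _ _ _ fun a _ ↦ ?_
  refine card_le_card_of_injOn (fun d ↦ a - d) ?_ ?_
  · intro d hd
    simp only [coe_filter, Set.mem_ofPred_eq] at hd
    exact hd.2
  · intro d _ e _ h
    simpa using h

lemma addEnergy_le_sum_sq (A : Finset G) :
    A.addEnergy A ≤ ∑ d ∈ A - A, #(shiftInter A d) ^ 2 := by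
  rw [addEnergy, card_eq_sum_card_fiberwise (f := fun q ↦ q.1.1 - q.1.2) (t := A - A)]
  · refine sum_le_sum fun d _ ↦ ?_
    rw [sq, ← card_product]
    -- `a₁ + b₁ = a₂ + b₂` with `a₁ - a₂ = d` means that `a₁ - d = a₂` and `b₂ - d = b₁`.
    refine card_le_card_of_injOn (fun q ↦ (q.1.1, q.2.2)) ?_ ?_
    · rintro ⟨⟨a, b⟩, c, e⟩ h
      simp only [coe_filter, mem_filter, mem_product, Set.mem_ofPred_eq] at h
      obtain ⟨⟨⟨⟨ha, hb⟩, hc, he⟩, h1⟩, rfl⟩ := h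
      have : e - (a - b) = c := by
        rw [sub_eq_iff_eq_add, ← sub_eq_zero]
        rw [← sub_eq_zero] at h1
        rw [← neg_eq_zero, ← h1]; abel
      simp [mem_shiftInter, this, ha, hb, hc, he]
    · rintro ⟨⟨a, b⟩, c, e⟩ h ⟨⟨a', b'⟩, c', e'⟩ h' heq
      simp only [coe_filter, mem_filter, mem_product, Set.mem_ofPred_eq] at h h'
      simp only [Prod.mk.injEq] at heq
      obtain ⟨rfl, rfl⟩ := heq
      obtain ⟨⟨_, h1⟩, rfl⟩ := h
      obtain ⟨⟨_, h2⟩, h3⟩ := h'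
      obtain rfl : b' = b := by simpa using h3
      obtain rfl : c = c' := by
        have := h1.trans h2.symm
        simpa using this
      rfl
  · intro q h
    simp only [coe_filter, mem_product, Set.mem_ofPred_eq] at h
    exact mem_coe.2 (sub_mem_sub h.1.1.1 h.1.1.2)

/-- A pair `(a, b) ∈ A²` lies in at most `#(shiftInter A (a - b))` of the squares of the sets
`shiftInter A d`, so pairs whose difference has few representations are rare on average over `d`. -/
lemma sum_card_bad_le (A D : Finset G) (t : ℝ) (ht : 0 ≤ t) :
    ∑ d ∈ D, (#{p ∈ shiftInter A d ×ˢ shiftInter A d | (#(shiftInter A (p.1 - p.2)) : ℝ) < t} : ℝ)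
      ≤ #A ^ 2 * t := by
  set P : Finset (G × G) := {p ∈ A ×ˢ A | (#(shiftInter A (p.1 - p.2)) : ℝ) < t} with hP
  have h : ∑ d ∈ D, #{p ∈ P | p.1 - d ∈ A ∧ p.2 - d ∈ A} =
      ∑ p ∈ P, #{d ∈ D | p.1 - d ∈ A ∧ p.2 - d ∈ A} := by
    simp only [card_filter]
    exact sum_comm
  have h0 : ∀ d, ({p ∈ shiftInter A d ×ˢ shiftInter A d |
      (#(shiftInter A (p.1 - p.2)) : ℝ) < t} : Finset (G × G)) =
        {p ∈ P | p.1 - d ∈ A ∧ p.2 - d ∈ A} := by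
    intro d
    ext p
    simp only [hP, mem_filter, mem_product, mem_shiftInter]
    tauto
  simp_rw [h0]
  rw [← Nat.cast_sum, h, Nat.cast_sum]
  have h1 : ∀ p ∈ P, (#{d ∈ D | p.1 - d ∈ A ∧ p.2 - d ∈ A} : ℝ) ≤ t := by
    intro p hp
    refine le_trans ?_ (mem_filter.1 hp).2.le
    rw [Nat.cast_le]
    refine card_le_card_of_injOn (fun d ↦ p.1 - d) ?_ ?_
    · intro d hd
      simp only [coe_filter, Set.mem_ofPred_eq] at hd
      rw [mem_coe, mem_shiftInter]
      refine ⟨hd.2.1, ?_⟩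
      have : p.1 - d - (p.1 - p.2) = p.2 - d := by abel
      rw [this]
      exact hd.2.2
    · intro d _ e _ h
      simpa using h
  refine (sum_le_card_nsmul _ _ _ h1).trans ?_
  rw [nsmul_eq_mul]
  gcongr
  have : #P ≤ #A ^ 2 := by
    rw [sq, ← card_product]
    exact card_filter_le _ _
  exact_mod_cast this

/-- Some `A ∩ (A + d)` is large, and most differences of pairs of its elements have many
representations in `A - A`. -/
lemma exists_popular_shift (A : Finset G) (hA : A.Nonempty) (K : ℝ) (hK : 1 ≤ K)
    (hE : (#A : ℝ) ^ 3 / K ≤ A.addEnergy A) :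
    ∃ d, (#A : ℝ) / (2 * K) ≤ #(shiftInter A d) ∧
      8 * (#{p ∈ shiftInter A d ×ˢ shiftInter A d |
        (#(shiftInter A (p.1 - p.2)) : ℝ) < #A / (16 * K)} : ℝ) ≤ #(shiftInter A d) ^ 2 := by
  have hn : (0 : ℝ) < #A := by exact_mod_cast hA.card_pos
  have hK0 : 0 < K := by linarith
  set n : ℝ := (#A : ℝ) with hndef
  set D : Finset G := {d ∈ A - A | n / (2 * K) ≤ #(shiftInter A d)} with hD
  have h1 : n ^ 3 / K ≤ ∑ d ∈ A - A, (#(shiftInter A d) : ℝ) ^ 2 :=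
    hE.trans (by exact_mod_cast addEnergy_le_sum_sq A)
  rw [← sum_filter_add_sum_filter_not (A - A) (fun d ↦ n / (2 * K) ≤ #(shiftInter A d))] at h1
  have h2 : ∑ d ∈ A - A with ¬ n / (2 * K) ≤ #(shiftInter A d), (#(shiftInter A d) : ℝ) ^ 2
      ≤ n / (2 * K) * n ^ 2 := by
    calc _ ≤ ∑ d ∈ A - A with ¬ n / (2 * K) ≤ #(shiftInter A d),
          n / (2 * K) * (#(shiftInter A d) : ℝ) := by
          refine sum_le_sum fun d hd ↦ ?_
          have := (not_le.1 (mem_filter.1 hd).2).le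
          rw [sq]
          gcongr
      _ ≤ _ := by
          rw [← mul_sum]
          gcongr
          rw [hndef]
          exact_mod_cast sum_card_shiftInter_le A _
  have h3 : n ^ 3 / (2 * K) ≤ ∑ d ∈ D, (#(shiftInter A d) : ℝ) ^ 2 := by
    have e : n ^ 3 / K = n ^ 3 / (2 * K) + n / (2 * K) * n ^ 2 := by field_simp; ring
    linarith
  have hDne : D.Nonempty := by
    by_contra hne
    rw [not_nonempty_iff_eq_empty] at hne
    rw [hne, sum_empty] at h3
    have : 0 < n ^ 3 / (2 * K) := by positivity
    linarith
  by_contra! hcon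
  have h4 := sum_card_bad_le A D (n / (16 * K)) (by positivity)
  have h5 := sum_lt_sum_of_nonempty hDne fun d hd ↦ hcon d (mem_filter.1 hd).2
  rw [← mul_sum] at h5
  have e : n ^ 3 / (2 * K) = 8 * (n ^ 2 * (n / (16 * K))) := by field_simp; ring
  linarith

/-- If `x - b` and `y - b` each have at least `t` representations in `A - A` for every `b ∈ B`, then
`x - y` has at least `#B * t ^ 2` representations as `(a₁ - a₂) - (a₃ - a₄)`. -/
lemma card_mul_sq_le_card_quadruples (A B : Finset G) (x y : G) (t : ℝ) (ht : 0 ≤ t)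
    (hx : ∀ b ∈ B, t ≤ #(shiftInter A (x - b))) (hy : ∀ b ∈ B, t ≤ #(shiftInter A (y - b))) :
    #B * t ^ 2 ≤
      (#{q ∈ (A ×ˢ A) ×ˢ (A ×ˢ A) | (q.1.1 - q.1.2) - (q.2.1 - q.2.2) = x - y} : ℝ) := by
  calc (#B * t ^ 2 : ℝ)
      ≤ ∑ b ∈ B, (#(shiftInter A (x - b) ×ˢ shiftInter A (y - b)) : ℝ) := by
        rw [← nsmul_eq_mul]
        refine card_nsmul_le_sum _ _ _ fun b hb ↦ ?_
        rw [card_product, Nat.cast_mul, sq]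
        exact mul_le_mul (hx b hb) (hy b hb) ht (by positivity)
    _ = (#(B.sigma fun b ↦ shiftInter A (x - b) ×ˢ shiftInter A (y - b)) : ℝ) := by
        rw [card_sigma, Nat.cast_sum]
    _ ≤ _ := by
        rw [Nat.cast_le]
        refine card_le_card_of_injOn
          (fun s ↦ ((s.2.1, s.2.1 - (x - s.1)), (s.2.2, s.2.2 - (y - s.1)))) ?_ ?_
        · rintro ⟨b, u, v⟩ h
          simp only [coe_sigma, Set.mem_sigma_iff, mem_coe, mem_product, mem_shiftInter] at h
          simp only [mem_coe, mem_filter, mem_product]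
          refine ⟨⟨h.2.1, h.2.2⟩, by abel⟩
        · rintro ⟨b, u, v⟩ _ ⟨b', u', v'⟩ _ h
          simp only [Prod.mk.injEq] at h
          obtain ⟨⟨rfl, h1⟩, rfl, -⟩ := h
          obtain rfl : b = b' := by simpa using h1
          rfl

end

theorem balog_szemeredi_gowers :
    ∃ C : ℝ, 0 < C ∧
      ∀ (G : Type*) [AddCommGroup G] [DecidableEq G] (A : Finset G), A.Nonempty →
        ∀ K : ℝ, 1 ≤ K → (#A : ℝ) ^ 3 / K ≤ Finset.addEnergy A A →
          ∃ A' ⊆ A, (#A : ℝ) / (C * K ^ C) ≤ #A' ∧ (#(A' - A') : ℝ) ≤ C * K ^ C * #A := by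
  refine ⟨1024, by norm_num, ?_⟩
  intro G _ _ A hA K hK hE
  obtain ⟨d, hd, hbad⟩ := exists_popular_shift A hA K hK hE
  have hn : (0 : ℝ) < #A := by exact_mod_cast hA.card_pos
  have hK0 : 0 < K := by linarith
  set n : ℝ := (#A : ℝ) with hndef
  set t : ℝ := n / (16 * K) with ht
  set S := shiftInter A d with hS
  have hspos : (0 : ℝ) < #S := lt_of_lt_of_le (by positivity) hd
  set bad : G → Finset G := fun a ↦ {b ∈ S | (#(shiftInter A (a - b)) : ℝ) < t} with hbaddef
  set A' : Finset G := {a ∈ S | 4 * (#(bad a) : ℝ) ≤ #S} with hA'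
  have hsum : ∑ a ∈ S, (#(bad a) : ℝ) =
      #{p ∈ S ×ˢ S | (#(shiftInter A (p.1 - p.2)) : ℝ) < t} := by
    rw [← Nat.cast_sum, Nat.cast_inj]
    simp only [hbaddef, card_filter, sum_product]
  have hcard : (#S : ℝ) / 2 ≤ #A' := by
    have h1 : (#{a ∈ S | ¬ 4 * (#(bad a) : ℝ) ≤ #S} : ℝ) * (#S / 4) ≤ ∑ a ∈ S, (#(bad a) : ℝ) := by
      rw [← nsmul_eq_mul]
      refine (card_nsmul_le_sum _ (fun a ↦ (#(bad a) : ℝ)) _ fun a ha ↦ ?_).trans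
        (sum_le_sum_of_subset_of_nonneg (filter_subset _ _) fun _ _ _ ↦ by positivity)
      have := not_le.1 (mem_filter.1 ha).2
      linarith
    have h2 : (#A' : ℝ) + #{a ∈ S | ¬ 4 * (#(bad a) : ℝ) ≤ #S} = #S := by
      rw [hA', ← Nat.cast_add, card_filter_add_card_filter_not]
    have h3 : (#{a ∈ S | ¬ 4 * (#(bad a) : ℝ) ≤ #S} : ℝ) ≤ #S / 2 := by
      refine le_of_mul_le_mul_right (a := (#S : ℝ) / 4) ?_ (by positivity)
      rw [hsum] at h1
      nlinarith
    linarith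
  have hpow : K ^ (3 : ℕ) ≤ K ^ (1024 : ℝ) := by
    rw [← Real.rpow_natCast]
    exact Real.rpow_le_rpow_of_exponent_le hK (by norm_num)
  have hpow1 : K ≤ K ^ (1024 : ℝ) := (le_self_pow₀ hK (by norm_num)).trans hpow
  refine ⟨A', fun a ha ↦ (mem_shiftInter.1 (mem_filter.1 ha).1).1, ?_, ?_⟩
  · calc n / (1024 * K ^ (1024 : ℝ)) ≤ n / (4 * K) := by gcongr; norm_num
      _ = n / (2 * K) / 2 := by field_simp; norm_num
      _ ≤ #S / 2 := by gcongr
      _ ≤ _ := hcard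
  · have hrep : ∀ z ∈ A' - A', n / (4 * K) * t ^ 2 ≤
        (#{q ∈ (A ×ˢ A) ×ˢ (A ×ˢ A) | (q.1.1 - q.1.2) - (q.2.1 - q.2.2) = z} : ℝ) := by
      intro z hz
      obtain ⟨x, hx, y, hy, rfl⟩ := mem_sub.1 hz
      have hx' := (mem_filter.1 hx).2
      have hy' := (mem_filter.1 hy).2
      have hB : (#S : ℝ) / 2 ≤ #(S \ (bad x ∪ bad y)) := by
        have h1 : #S ≤ #(S \ (bad x ∪ bad y)) + #(bad x ∪ bad y) :=
          Nat.sub_le_iff_le_add.1 (le_card_sdiff _ _)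
        have h2 := card_union_le (bad x) (bad y)
        have h3 : (#S : ℝ) ≤ #(S \ (bad x ∪ bad y)) + (#(bad x) + #(bad y)) := by
          exact_mod_cast h1.trans (by gcongr)
        linarith
      refine le_trans ?_ (card_mul_sq_le_card_quadruples A (S \ (bad x ∪ bad y)) x y t
        (by positivity) ?_ ?_)
      · gcongr
        refine le_trans (le_of_eq ?_) ((div_le_div_of_nonneg_right hd zero_le_two).trans hB)
        field_simp
        norm_num
      all_goals
        intro b hb
        simp only [hbaddef, mem_sdiff, mem_union, mem_filter, not_or, not_and, not_lt] at hb
      · exact hb.2.1 hb.1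
      · exact hb.2.2 hb.1
    have htot : (#(A' - A') : ℝ) * (n / (4 * K) * t ^ 2) ≤ n ^ 4 := by
      rw [← nsmul_eq_mul]
      refine (card_nsmul_le_sum _ _ _ hrep).trans ?_
      rw [← Nat.cast_sum]
      have h1 := (sum_card_fiberwise_eq_card_filter ((A ×ˢ A) ×ˢ (A ×ˢ A)) (A' - A')
        (fun q : (G × G) × (G × G) ↦ (q.1.1 - q.1.2) - (q.2.1 - q.2.2))).trans_le
          (card_filter_le _ _)
      have h2 : #((A ×ˢ A) ×ˢ (A ×ˢ A)) = #A ^ 4 := by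
        simp only [card_product]; ring
      rw [h2] at h1
      rw [hndef]
      exact_mod_cast h1
    have hfin : (#(A' - A') : ℝ) ≤ 1024 * K ^ 3 * n := by
      have hc : 0 < n / (4 * K) * t ^ 2 := by positivity
      refine le_of_mul_le_mul_right (htot.trans (le_of_eq ?_)) hc
      rw [ht]
      field_simp
      norm_num
    refine hfin.trans ?_
    gcongr
end

section
/- Let G be a commutative group and A, B finite nonempty subsets of G. Let H = {g ∈ G : g + (A + B) = A + B} be the stabilizer of A + B. Then |A + B| ≥ |A + H| + |B + H| − |H|. -/
/-!
Say that a finite set `C` is `n`-large if it is a union of cosets of some finite subgroup `K` with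
`n ≤ |C| + |K|`. The theorem says, after replacing `A`, `B` by `A + H`, `B + H` (which does not
change `A + B`), that `A + B` is `(|A| + |B|)`-large: a subgroup `K` witnessing this lies in `H`.

* Every `a + b ∈ A + B` lies in an `(|A| + |B|)`-large subset of `A + B` (`exists_isLarge`).
  Dyson's e-transform `(A, B) ↦ (A ∪ (e + B), B ∩ (A - e))`, with `e = a' - b` and `a' ∈ A`,
  preserves `|A| + |B|`, keeps `a` and `b`, and does not enlarge the sumset. When no such transform
  shrinks `B`, every element of `B - b` stabilizes `A`, so `A + b` is the required subset.
* The union of two `n`-large sets is `n`-large (`IsLarge.union`). If neither of `C₁`, `C₂`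
  contains the other, the subgroup `K₁ ∩ K₂` works. The reason is a count inside a single coset of
  `K₁ + K₂`, which is a grid of cosets of `K₁ ∩ K₂` in which `C₁` is a union of rows and `C₂` a
  union of columns (`mul_card_le`, `card_lt_card_of_mem`).
-/

open Finset
open scoped Pointwise

section Kneser

variable {G : Type*} [AddCommGroup G] [DecidableEq G]

/-- `C` is stable under translation by a finite subgroup `K` with `n ≤ |C| + |K|`. The finite set
`F` is the underlying set of `K`. -/
def IsLarge (n : ℕ) (C : Finset G) : Prop :=
  ∃ (K : AddSubgroup G) (F : Finset G), (∀ g, g ∈ F ↔ g ∈ K) ∧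
    (∀ g ∈ K, ∀ c ∈ C, g + c ∈ C) ∧ n ≤ #C + #F

/-- The map `(s, t) ↦ x + s + t` on `F₁ × F₂` has fibres of size at most `|F₁ ∩ F₂|`. -/
lemma mul_card_le (K₁ K₂ : AddSubgroup G) {F₀ : Finset G}
    (h₀ : ∀ g, g ∈ F₀ ↔ g ∈ K₁ ∧ g ∈ K₂) {S T D : Finset G} (x : G)
    (hS : ∀ s ∈ S, s ∈ K₁) (hT : ∀ t ∈ T, t ∈ K₂)
    (hD : ∀ s ∈ S, ∀ t ∈ T, x + s + t ∈ D) : #S * #T ≤ #F₀ * #D := by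
  rw [← card_product]
  refine card_le_mul_card_image_of_maps_to (f := fun p : G × G => x + p.1 + p.2) ?_ _ ?_
  · rintro ⟨s, t⟩ h
    rw [mem_product] at h
    exact hD s h.1 t h.2
  · intro y _
    rcases Finset.eq_empty_or_nonempty {p ∈ S ×ˢ T | x + p.1 + p.2 = y} with h | ⟨⟨s, t⟩, h⟩
    · rw [h]; simp
    · simp only [mem_filter, mem_product] at h
      obtain ⟨⟨hs, ht⟩, rfl⟩ := h
      refine card_le_card_of_injOn (fun p => p.1 - s) ?_ ?_
      · rintro ⟨s', t'⟩ h'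
        simp only [mem_coe, mem_filter, mem_product] at h'
        obtain ⟨⟨hs', ht'⟩, e⟩ := h'
        refine (h₀ _).2 ⟨K₁.sub_mem (hS _ hs') (hS _ hs), ?_⟩
        have : s' - s = t - t' := by
          rw [add_assoc, add_assoc, add_right_inj] at e
          rw [sub_eq_sub_iff_add_eq_add, e, add_comm]
        simpa only [this] using K₂.sub_mem (hT _ ht) (hT _ ht')
      · rintro ⟨s₁, t₁⟩ h₁ ⟨s₂, t₂⟩ h₂ e
        simp only [mem_coe, mem_filter] at h₁ h₂
        have e' : s₁ = s₂ := sub_left_injective e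
        subst e'
        have := h₁.2.trans h₂.2.symm
        rw [add_right_inj] at this
        rw [this]

/-- If both differences `C₂ \ C₁` and `C₁ \ C₂` are too small and the first one is nonempty, then
`K₂` is strictly smaller than `K₁`. Since the hypotheses on the sizes are symmetric, at most one of
the two differences can then be nonempty. -/
lemma card_lt_card_of_mem (K₁ K₂ : AddSubgroup G) {F₁ F₂ F₀ C₁ C₂ : Finset G}
    (h₁ : ∀ g, g ∈ F₁ ↔ g ∈ K₁) (h₂ : ∀ g, g ∈ F₂ ↔ g ∈ K₂)
    (h₀ : ∀ g, g ∈ F₀ ↔ g ∈ K₁ ∧ g ∈ K₂)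
    (hC₁ : ∀ g ∈ K₁, ∀ c ∈ C₁, g + c ∈ C₁) (hC₂ : ∀ g ∈ K₂, ∀ c ∈ C₂, g + c ∈ C₂)
    (ha : #(C₂ \ C₁) + #F₀ < #F₁) (hb : #(C₁ \ C₂) + #F₀ < #F₂)
    {x : G} (hx₂ : x ∈ C₂) (hx₁ : x ∉ C₁) : #F₂ < #F₁ := by
  have hC₁' : ∀ g ∈ K₁, ∀ c, g + c ∈ C₁ → c ∈ C₁ := fun g hg c hc => by
    simpa using hC₁ _ (K₁.neg_mem hg) _ hc
  have hC₂' : ∀ g ∈ K₂, ∀ c, g + c ∈ C₂ → c ∈ C₂ := fun g hg c hc => by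
    simpa using hC₂ _ (K₂.neg_mem hg) _ hc
  -- `S` indexes the columns of `x + K₁ + K₂` lying in `C₂`, and `T` the rows missing `C₁`.
  set S := F₁.filter (fun g => x + g ∈ C₂) with hS
  set S' := F₁.filter (fun g => ¬ x + g ∈ C₂) with hS'
  set T := F₂.filter (fun g => ¬ x + g ∈ C₁) with hT
  set T' := F₂.filter (fun g => x + g ∈ C₁) with hT'
  have cS : #S + #S' = #F₁ := card_filter_add_card_filter_not _
  have cT : #T' + #T = #F₂ := card_filter_add_card_filter_not _
  have hST : #S * #T ≤ #F₀ * #(C₂ \ C₁) := by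
    refine mul_card_le K₁ K₂ h₀ x (fun s hs => (h₁ s).1 (mem_filter.1 hs).1)
      (fun t ht => (h₂ t).1 (mem_filter.1 ht).1) fun s hs t ht => ?_
    simp only [hS, hT, mem_filter, h₁, h₂] at hs ht
    refine mem_sdiff.2 ⟨?_, fun h => ht.2 (hC₁' s hs.1 _ ?_)⟩
    · rw [add_comm]; exact hC₂ t ht.1 _ hs.2
    · convert h using 1; abel
  have hST' : #S' * #T' ≤ #F₀ * #(C₁ \ C₂) := by
    refine mul_card_le K₁ K₂ h₀ x (fun s hs => (h₁ s).1 (mem_filter.1 hs).1)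
      (fun t ht => (h₂ t).1 (mem_filter.1 ht).1) fun s hs t ht => ?_
    simp only [hS', hT', mem_filter, h₁, h₂] at hs ht
    refine mem_sdiff.2 ⟨?_, fun h => hs.2 (hC₂' t ht.1 _ ?_)⟩
    · convert hC₁ s hs.1 _ ht.2 using 1; abel
    · rwa [add_comm]
  have S0 : #F₀ ≤ #S := card_le_card fun g hg => by
    have := (h₀ g).1 hg
    refine mem_filter.2 ⟨(h₁ g).2 this.1, ?_⟩
    rw [add_comm]; exact hC₂ g this.2 x hx₂
  have T0 : #F₀ ≤ #T := card_le_card fun g hg => by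
    have := (h₀ g).1 hg
    refine mem_filter.2 ⟨(h₂ g).2 this.2, fun h => hx₁ (hC₁' g this.1 x ?_)⟩
    rwa [add_comm]
  have F0 : 0 < #F₀ := card_pos.2 ⟨0, (h₀ 0).2 ⟨K₁.zero_mem, K₂.zero_mem⟩⟩
  rcases Finset.eq_empty_or_nonempty T' with h | ⟨t₀, ht₀⟩
  · rw [h, card_empty, zero_add] at cT
    rw [cT] at hST
    nlinarith
  · -- A row of `C₁` meets the coset: both size hypotheses contradict each other inside it.
    exfalso
    simp only [hT', mem_filter, h₂] at ht₀
    have T0' : #F₀ ≤ #T' := by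
      refine card_le_card_of_injOn (fun g => g + t₀) (fun g hg => ?_)
        (add_left_injective t₀).injOn
      have := (h₀ g).1 hg
      refine mem_coe.2 (mem_filter.2 ⟨(h₂ _).2 (K₂.add_mem this.2 ht₀.1), ?_⟩)
      rw [add_left_comm]
      exact hC₁ g this.1 _ ht₀.2
    rw [← cS] at ha
    rw [← cT] at hb
    zify at *
    generalize (#S : ℤ) = s at *
    generalize (#S' : ℤ) = q at *
    generalize (#T : ℤ) = t at *
    generalize (#T' : ℤ) = u at *
    generalize (#F₀ : ℤ) = f at *
    have e₁ : s * (t - f) < f * (q - f) := by nlinarith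
    have e₂ : u * (q - f) < f * (t - f) := by nlinarith
    have e₃ : f * (t - f) ≤ s * (t - f) := mul_le_mul_of_nonneg_right S0 (by linarith)
    have e₄ : 0 < q - f := by
      refine pos_of_mul_pos_right (a := f) ?_ F0.le
      nlinarith
    have e₅ : f * (q - f) ≤ u * (q - f) := mul_le_mul_of_nonneg_right T0' e₄.le
    linarith

/-- Being `n`-large is preserved by unions, which lets the local bounds around each point of a
sumset be combined into a global one. -/
lemma IsLarge.union {n : ℕ} {C₁ C₂ : Finset G} (H₁ : IsLarge n C₁) (H₂ : IsLarge n C₂) :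
    IsLarge n (C₁ ∪ C₂) := by
  by_cases s₁ : C₁ ⊆ C₂
  · rwa [union_eq_right.2 s₁]
  by_cases s₂ : C₂ ⊆ C₁
  · rwa [union_eq_left.2 s₂]
  obtain ⟨K₁, F₁, h₁, hC₁, hn₁⟩ := H₁
  obtain ⟨K₂, F₂, h₂, hC₂, hn₂⟩ := H₂
  have h₀ : ∀ g, g ∈ F₁ ∩ F₂ ↔ g ∈ K₁ ∧ g ∈ K₂ := fun g => by rw [mem_inter, h₁, h₂]
  refine ⟨K₁ ⊓ K₂, F₁ ∩ F₂, h₀, fun g hg c hc => ?_, ?_⟩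
  · rcases mem_union.1 hc with hc | hc
    · exact mem_union_left _ (hC₁ g hg.1 c hc)
    · exact mem_union_right _ (hC₂ g hg.2 c hc)
  · by_contra hlt
    have c₁ : #(C₂ \ C₁) + #C₁ = #(C₁ ∪ C₂) := by rw [card_sdiff_add_card, union_comm]
    have c₂ : #(C₁ \ C₂) + #C₂ = #(C₁ ∪ C₂) := card_sdiff_add_card _ _
    obtain ⟨x, hx₂, hx₁⟩ := not_subset.1 s₂
    obtain ⟨y, hy₁, hy₂⟩ := not_subset.1 s₁
    have l₁ := card_lt_card_of_mem K₁ K₂ h₁ h₂ h₀ hC₁ hC₂ (by omega) (by omega) hx₂ hx₁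
    have l₂ := card_lt_card_of_mem K₂ K₁ h₂ h₁ (fun g => (h₀ g).trans and_comm) hC₂ hC₁
      (by omega) (by omega) hy₁ hy₂
    omega

/-- Each `a + b ∈ A + B` lies in an `(|A| + |B|)`-large subset of `A + B`. The parameter `m = |B|`
decreases along Dyson's e-transforms. -/
lemma exists_isLarge (m : ℕ) : ∀ (A B : Finset G), #B = m → ∀ a ∈ A, ∀ b ∈ B,
    ∃ C ⊆ A + B, a + b ∈ C ∧ IsLarge (#A + #B) C := by
  induction m using Nat.strong_induction_on with
  | _ m ih =>
  intro A B hm a ha b hb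
  by_cases h : ∀ a' ∈ A, ∀ b' ∈ B, b' - b + a' ∈ A
  · have hstab : ∀ b' ∈ B, b' - b ∈ AddAction.stabilizer G A := fun b' hb' => by
      rw [AddAction.mem_stabilizer_iff]
      refine eq_of_subset_of_card_le (fun y hy => ?_) (by rw [card_vadd_finset])
      obtain ⟨a', ha', rfl⟩ := mem_vadd_finset.1 hy
      exact h a' ha' b' hb'
    have hK : ∀ g ∈ AddAction.stabilizer G A, ∀ c ∈ A, g + c ∈ A := fun g hg c hc => by
      have := vadd_mem_vadd_finset (a := g) hc
      rwa [AddAction.mem_stabilizer_iff.1 hg] at this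
    refine ⟨A + {b}, add_subset_add_left (singleton_subset_iff.2 hb),
      add_mem_add ha (mem_singleton_self b), AddAction.stabilizer G A,
      (A - A).filter (fun g => g +ᵥ A = A), fun g => ?_, fun g hg c hc => ?_, ?_⟩
    · rw [mem_filter, AddAction.mem_stabilizer_iff, and_iff_right_iff_imp]
      intro hg
      exact mem_sub.2 ⟨g + a, hK g hg a ha, a, ha, by abel⟩
    · obtain ⟨c', hc', z, hz, rfl⟩ := mem_add.1 hc
      exact mem_add.2 ⟨g + c', hK g hg c' hc', z, hz, add_assoc _ _ _⟩
    · rw [card_add_singleton, add_le_add_iff_left]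
      refine card_le_card_of_injOn (fun b' => b' - b) (fun b' hb' => ?_) (sub_left_injective).injOn
      have := hstab b' hb'
      refine mem_coe.2 (mem_filter.2 ⟨mem_sub.2 ⟨b' - b + a, hK _ this a ha, a, ha,
        add_sub_cancel_right _ _⟩, this⟩)
  · push Not at h
    obtain ⟨a', ha', b', hb', hn⟩ := h
    set e := a' - b with he
    have hlt : #(B ∩ (-e +ᵥ A)) < m := by
      rw [← hm]
      refine card_lt_card ⟨inter_subset_left, fun hs => hn ?_⟩
      have := (mem_inter.1 (hs hb')).2
      rw [mem_neg_vadd_finset_iff, vadd_eq_add] at this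
      convert this using 1
      rw [he]; abel
    obtain ⟨C, hC, hab, hl⟩ := ih _ hlt (A ∪ (e +ᵥ B)) (B ∩ (-e +ᵥ A)) rfl a
      (mem_union_left _ ha) b (mem_inter.2 ⟨hb, by
        rw [mem_neg_vadd_finset_iff, vadd_eq_add]
        simpa [he] using ha'⟩)
    have hsub := addDysonETransform.subset e (A, B)
    have hcard := addDysonETransform.card e (A, B)
    simp only [addDysonETransform] at hsub hcard
    exact ⟨C, hC.trans hsub, hab, hcard ▸ hl⟩

end Kneser

/-- **Kneser's theorem**: let `A`, `B` be finite nonempty subsets of a commutative group and let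
`H` be the stabilizer `{g : g + (A + B) = A + B}` of `A + B`. Then
`|A + B| ≥ |A + H| + |B + H| − |H|`. -/
theorem kneser_theorem {G : Type*} [AddCommGroup G] [DecidableEq G]
    (A B : Finset G) (hA : A.Nonempty) (hB : B.Nonempty)
    (H : Finset G) (hH : ∀ g : G, g ∈ H ↔ g +ᵥ (A + B) = A + B) :
    (#(A + H) : ℤ) + #(B + H) - #H ≤ #(A + B) := by
  have h0 : (0 : G) ∈ H := (hH 0).2 (zero_vadd G _)
  have hadd : ∀ g ∈ H, ∀ c ∈ A + B, g + c ∈ A + B := fun g hg c hc => by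
    have := vadd_mem_vadd_finset (a := g) hc
    rwa [(hH g).1 hg] at this
  have hsum : (A + H) + (B + H) = A + B := by
    refine Subset.antisymm (fun x hx => ?_) (add_subset_add (fun a ha => ?_) (fun b hb => ?_))
    · obtain ⟨y, hy, z, hz, rfl⟩ := mem_add.1 hx
      obtain ⟨a, ha, g, hg, rfl⟩ := mem_add.1 hy
      obtain ⟨b, hb, g', hg', rfl⟩ := mem_add.1 hz
      convert hadd g hg _ (hadd g' hg' _ (add_mem_add ha hb)) using 1; abel
    · exact mem_add.2 ⟨a, ha, 0, h0, add_zero a⟩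
    · exact mem_add.2 ⟨b, hb, 0, h0, add_zero b⟩
  set n := #(A + H) + #(B + H) with hn
  have key : ∀ c ∈ A + B, ∃ C ⊆ A + B, c ∈ C ∧ IsLarge n C := fun c hc => by
    rw [← hsum] at hc ⊢
    obtain ⟨a, ha, b, hb, rfl⟩ := mem_add.1 hc
    exact exists_isLarge _ (A + H) (B + H) rfl a ha b hb
  choose! f hf hcf hlf using key
  have hne : (A + B).Nonempty := hA.add hB
  have hU : (A + B).sup' hne f = A + B := by
    refine Subset.antisymm (Finset.sup'_le hne f hf) fun c hc => ?_
    exact (Finset.le_sup' f hc) (hcf c hc)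
  have hL : IsLarge n (A + B) := by
    rw [← hU]
    exact Finset.sup'_induction hne f (fun _ h₁ _ h₂ => h₁.union h₂) hlf
  obtain ⟨K, F, hF, hK, hle⟩ := hL
  have hFH : #F ≤ #H := card_le_card fun g hg => by
    refine (hH g).2 (eq_of_subset_of_card_le (fun y hy => ?_) (by rw [card_vadd_finset]))
    obtain ⟨c, hc, rfl⟩ := mem_vadd_finset.1 hy
    exact hK g ((hF g).1 hg) c hc
  omega
end

section
/- Let D be a 2-(v, k, λ) design with λ ≥ 1 and 2 ≤ k < v, having b blocks. Then b ≥ v. -/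
/-! Let `r p` be the number of blocks through the point `p`. Summing a function `x : P → ℝ` over each
block gives a linear map from `P → ℝ` to functions on the blocks, and its Gram form is
`∑ i, (∑ p ∈ B i, x p) ^ 2 = l * (∑ p, x p) ^ 2 + ∑ p, (r p - l) * x p ^ 2`
(`sum_sq_blockSum`). Since no block is all of `P`, one has `l < r p` for every `p`
(`lambda_lt_replication`), so this form is positive definite, the map is injective, and comparing
dimensions gives `v ≤ b`. The multiset of blocks is handled as a family
indexed by `Multiset.ToType`. -/

open Finset

/-- Every point `p` lies on more than `l` blocks. If at most `l` blocks met `p`, each of them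
would contain every other point and so be the whole point set; `1 ≤ l` provides a block through `p`. -/
lemma lambda_lt_replication {P ι : Type*} [Fintype P] [DecidableEq P] [Fintype ι]
    {k l : ℕ} (B : ι → Finset P) (hk : ∀ i, #(B i) = k)
    (hl : ∀ p q : P, p ≠ q → #{i | p ∈ B i ∧ q ∈ B i} = l)
    (hl1 : 1 ≤ l) (hk2 : 2 ≤ k) (hkv : k < Fintype.card P) (p : P) :
    l < #{i | p ∈ B i} := by
  have hsub : ∀ q, (univ.filter fun i => p ∈ B i ∧ q ∈ B i) ⊆ univ.filter fun i => p ∈ B i := by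
    intro q i
    simp +contextual
  obtain ⟨q, hq⟩ := Fintype.exists_ne_of_one_lt_card (by omega : 1 < Fintype.card P) p
  by_contra! hle
  obtain ⟨i, hi⟩ := card_pos.mp (by rw [hl p q hq.symm]; omega :
    0 < #{i | p ∈ B i ∧ q ∈ B i})
  have hpi : p ∈ B i := (mem_filter.mp hi).2.1
  have huniv : B i = univ := by
    refine eq_univ_of_forall fun t => ?_
    by_cases ht : p = t
    · exact ht ▸ hpi
    -- the `l` blocks through `p` and `t` already exhaust the blocks through `p`
    · have he := eq_of_subset_of_card_le (hsub t) (by rw [hl p t ht]; exact hle)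
      have hm : i ∈ univ.filter fun i => p ∈ B i := by simpa using hpi
      rw [← he] at hm
      exact (mem_filter.mp hm).2.2
  have hc := hk i
  rw [huniv, card_univ] at hc
  omega

/-- The Gram form of the incidence matrix: off the diagonal its coefficients are all `l`, and on
the diagonal they are the replication numbers. -/
lemma sum_sq_blockSum {P ι : Type*} [Fintype P] [DecidableEq P] [Fintype ι]
    {l : ℕ} (B : ι → Finset P)
    (hl : ∀ p q : P, p ≠ q → #{i | p ∈ B i ∧ q ∈ B i} = l) (x : P → ℝ) :
    ∑ i, (∑ p ∈ B i, x p) ^ 2 =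
      l * (∑ p, x p) ^ 2 + ∑ p, ((#{i | p ∈ B i} : ℝ) - l) * x p ^ 2 := by
  have h1 : ∀ i, (∑ p ∈ B i, x p) ^ 2 =
      ∑ p, ∑ q, if p ∈ B i ∧ q ∈ B i then x p * x q else 0 := by
    intro i
    have h : ∑ p ∈ B i, x p = ∑ p, if p ∈ B i then x p else 0 := by simp
    rw [h, sq, sum_mul_sum]
    refine sum_congr rfl fun p _ => sum_congr rfl fun q _ => ?_
    by_cases hp : p ∈ B i <;> by_cases hq : q ∈ B i <;> simp [hp, hq]
  have h2 : ∀ p q, (∑ i, if p ∈ B i ∧ q ∈ B i then x p * x q else 0) =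
      l * (x p * x q) + if p = q then ((#{i | p ∈ B i} : ℝ) - l) * x p ^ 2 else 0 := by
    intro p q
    rw [← sum_filter, sum_const, nsmul_eq_mul]
    by_cases h : p = q
    · subst h
      simp only [and_self, if_true]
      ring
    · rw [hl p q h]
      simp [h]
  calc ∑ i, (∑ p ∈ B i, x p) ^ 2
      = ∑ p, ∑ q, ∑ i, if p ∈ B i ∧ q ∈ B i then x p * x q else 0 := by
        simp_rw [h1]
        rw [sum_comm]
        exact sum_congr rfl fun p _ => sum_comm
    _ = _ := by
        rw [sq (∑ p, x p), sum_mul_sum]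
        simp_rw [h2, sum_add_distrib, mul_sum]
        simp

lemma fisher_indexed {P ι : Type*} [Fintype P] [DecidableEq P] [Fintype ι]
    {k l : ℕ} (B : ι → Finset P) (hk : ∀ i, #(B i) = k)
    (hl : ∀ p q : P, p ≠ q → #{i | p ∈ B i ∧ q ∈ B i} = l)
    (hl1 : 1 ≤ l) (hk2 : 2 ≤ k) (hkv : k < Fintype.card P) :
    Fintype.card P ≤ Fintype.card ι := by
  let T : (P → ℝ) →ₗ[ℝ] (ι → ℝ) := LinearMap.pi fun i => ∑ p ∈ B i, LinearMap.proj p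
  have hT : Function.Injective T := by
    rw [injective_iff_map_eq_zero]
    intro x hx
    have h0 : ∀ i, ∑ p ∈ B i, x p = 0 := fun i => by simpa [T] using congrFun hx i
    have hsum := sum_sq_blockSum B hl x
    simp only [h0, ne_eq, OfNat.ofNat_ne_zero, not_false_eq_true, zero_pow, sum_const_zero] at hsum
    have hr : ∀ p, (0 : ℝ) < (#{i | p ∈ B i} : ℝ) - l := fun p =>
      sub_pos.mpr (by exact_mod_cast lambda_lt_replication B hk hl hl1 hk2 hkv p)
    have hnn : ∀ p ∈ univ, 0 ≤ ((#{i | p ∈ B i} : ℝ) - l) * x p ^ 2 := fun p _ =>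
      mul_nonneg (hr p).le (sq_nonneg _)
    have hz : ∑ p, ((#{i | p ∈ B i} : ℝ) - l) * x p ^ 2 = 0 := by
      have ha : 0 ≤ (l : ℝ) * (∑ p, x p) ^ 2 := by positivity
      have hb := sum_nonneg hnn
      linarith
    funext p
    have hp := (sum_eq_zero_iff_of_nonneg hnn).mp hz p (mem_univ p)
    simpa [(hr p).ne'] using hp
  simpa using LinearMap.finrank_le_finrank_of_injective hT

/-- **Fisher's inequality**: a 2-(v, k, λ) design with `λ ≥ 1` and `2 ≤ k < v`, having `b` blocks,
satisfies `b ≥ v`. Points are the elements of the finite type `P`, and the blocks form a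
multiset of `k`-element subsets of `P` such that every pair of distinct points lies in exactly
`λ` blocks. -/
theorem fisher_inequality {P : Type*} [Fintype P] [DecidableEq P]
    (v k l b : ℕ) (blocks : Multiset (Finset P))
    (hv : Fintype.card P = v) (hb : Multiset.card blocks = b)
    (hk : ∀ blk ∈ blocks, #blk = k)
    (hl : ∀ p q : P, p ≠ q → Multiset.card (blocks.filter fun blk => p ∈ blk ∧ q ∈ blk) = l)
    (hl1 : 1 ≤ l) (hk2 : 2 ≤ k) (hkv : k < v) :
    v ≤ b := by
  subst hv hb
  rw [← Multiset.card_coe blocks]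
  refine fisher_indexed (fun i : blocks => (i : Finset P))
    (fun i => hk _ (Multiset.coe_mem)) (fun p q hpq => ?_) hl1 hk2 hkv
  rw [← hl p q hpq]
  conv_rhs => rw [← Multiset.map_univ_coe blocks, Multiset.filter_map, Multiset.card_map]
  rfl
end

section
/- Let G be a finite simple graph on n vertices and let r ≥ 1. If G contains no clique of size r + 1, then the number of edges of G is at most (1 − 1/r)·n²/2. -/
open Finset

/-- **Turán's graph theorem**: a finite simple graph on `n` vertices with no clique of size
`r + 1` (where `r ≥ 1`) has at most `(1 − 1/r)·n²/2` edges. -/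
theorem turan_graph_theorem {V : Type*} [Fintype V] [DecidableEq V]
    (G : SimpleGraph V) [DecidableRel G.Adj] (r : ℕ) (hr : 1 ≤ r)
    (h : G.CliqueFree (r + 1)) :
    (#G.edgeFinset : ℝ) ≤ (1 - 1 / r) * (Fintype.card V) ^ 2 / 2 := by
  -- Among `K_{r+1}`-free graphs the Turán graph `T(n, r)` has the most edges, and
  -- `2r · e(T(n, r)) ≤ (r - 1) n²`.
  have hG := h.card_edgeFinset_le
  simp only [← SimpleGraph.card_edgeFinset_turanGraph] at hG
  have hT : 2 * r * #G.edgeFinset ≤ (r - 1) * Fintype.card V ^ 2 :=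
    (Nat.mul_le_mul_left _ hG).trans SimpleGraph.mul_card_edgeFinset_turanGraph_le
  have hR : 2 * (r : ℝ) * #G.edgeFinset ≤ (r - 1) * (Fintype.card V : ℝ) ^ 2 := by
    rw [← Nat.cast_pred hr]
    exact_mod_cast hT
  have hr0 : (0 : ℝ) < r := by exact_mod_cast hr
  have e : (1 - 1 / (r : ℝ)) * (Fintype.card V : ℝ) ^ 2 / 2
      = (r - 1) * (Fintype.card V : ℝ) ^ 2 / (2 * r) := by field_simp
  rw [e, le_div_iff₀ (by positivity)]
  linarith
end

section
/- Assume the continuum hypothesis. Then there exists a set F of entire functions ℂ → ℂ (functions analytic on all of ℂ) with the cardinality of the continuum (in particular, F is uncountable) such that for every z ∈ ℂ, the set {f z : f ∈ F} is countable. -/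
/-!
Erdős's construction. Fix a countable dense set `D ⊆ ℂ`. Under CH, `ℂ` carries a well-order all of
whose proper initial segments are countable. By transfinite recursion, choose for each `x : ℂ` an
entire function `f x`, different from every `f y` with `y < x`, such that `f x` maps every `y < x`
into `D`; countably many conditions are imposed at each stage, and `exists_entire_of_countable`
meets them. The functions `f x` are pairwise distinct, so there are continuum many of them. At a
fixed `z`, all the values `f x z` with `z < x` lie in `D`, and only countably many `x` satisfy
`x ≤ z`, so the values at `z` form a countable set.

The functions are Newton series `∑ a n * ∏ i < n, (w - z i)`, where `z` enumerates the points at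
which values are prescribed: the value at `z n` depends on `a 0, …, a n` only, and, `D` being dense,
`a n` can be chosen arbitrarily small so that this value lies in `D` and avoids one given number
(a diagonal argument then gives a new function). Smallness of the `a n` makes the series entire.
-/

/-- A Newton series with sufficiently small coefficients is an entire function: the factors satisfy
`‖w - z i‖ ≤ (1 + ‖w‖) * (1 + ‖z i‖)`, so it is dominated by the exponential series of `1 + ‖w‖`. -/
lemma differentiable_newton_series (z a : ℕ → ℂ)
    (ha : ∀ n, ‖a n‖ * ∏ i ∈ Finset.range n, (1 + ‖z i‖) ≤ 1 / (n.factorial : ℝ)) :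
    Differentiable ℂ fun w => ∑' n, a n * ∏ i ∈ Finset.range n, (w - z i) := by
  intro w₀
  have key : DifferentiableOn ℂ (fun w => ∑' n, a n * ∏ i ∈ Finset.range n, (w - z i))
      (Metric.ball 0 (‖w₀‖ + 1)) := by
    refine Complex.differentiableOn_tsum_of_summable_norm
      (Real.summable_pow_div_factorial (1 + (‖w₀‖ + 1))) (fun n => ?_) Metric.isOpen_ball
      fun n w hw => ?_
    · fun_prop
    · have hw' : ‖w‖ ≤ ‖w₀‖ + 1 := (mem_ball_zero_iff.mp hw).le
      have h1 : ∏ i ∈ Finset.range n, ‖w - z i‖ ≤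
          (1 + (‖w₀‖ + 1)) ^ n * ∏ i ∈ Finset.range n, (1 + ‖z i‖) := by
        calc ∏ i ∈ Finset.range n, ‖w - z i‖
            ≤ ∏ i ∈ Finset.range n, ((1 + (‖w₀‖ + 1)) * (1 + ‖z i‖)) := by
              refine Finset.prod_le_prod (fun i _ => norm_nonneg _) fun i _ => ?_
              have h2 := norm_sub_le w (z i)
              nlinarith [norm_nonneg (z i), norm_nonneg w₀,
                mul_nonneg (norm_nonneg w₀) (norm_nonneg (z i))]
          _ = _ := by rw [Finset.prod_mul_distrib]; simp
      rw [norm_mul, norm_prod]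
      calc ‖a n‖ * ∏ i ∈ Finset.range n, ‖w - z i‖
          ≤ ‖a n‖ * ((1 + (‖w₀‖ + 1)) ^ n * ∏ i ∈ Finset.range n, (1 + ‖z i‖)) := by gcongr
        _ = (1 + (‖w₀‖ + 1)) ^ n * (‖a n‖ * ∏ i ∈ Finset.range n, (1 + ‖z i‖)) := by ring
        _ ≤ (1 + (‖w₀‖ + 1)) ^ n * (1 / (n.factorial : ℝ)) := by gcongr; exact ha n
        _ = _ := by ring
  exact key.differentiableAt (Metric.isOpen_ball.mem_nhds (by simp))

/-- An affine function of `c` with nonzero slope takes a value in a given dense set, other than a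
given number, at some arbitrarily small `c`. -/
lemma exists_small_coeff {D : Set ℂ} (hD : Dense D) (v p g : ℂ) (hp : p ≠ 0) {ε : ℝ}
    (hε : 0 < ε) : ∃ c : ℂ, ‖c‖ ≤ ε ∧ v + c * p ∈ D ∧ v + c * p ≠ g := by
  obtain ⟨d, ⟨hd, hdg⟩, hdist⟩ :=
    (hD.sdiff_singleton g).exists_dist_lt v (mul_pos hε (norm_pos_iff.mpr hp))
  have hval : v + (d - v) / p * p = d := by field_simp; ring
  refine ⟨(d - v) / p, ?_, hval.symm ▸ hd, hval.symm ▸ hdg⟩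
  rw [norm_div, div_le_iff₀ (norm_pos_iff.mpr hp), ← dist_eq_norm, dist_comm]
  exact hdist.le

/-- Interpolation along a sequence of distinct points: an entire function can have all its values at
these points in a dense set while avoiding, at each point, one given number. -/
lemma exists_entire_of_seq {D : Set ℂ} (hD : Dense D) (z g : ℕ → ℂ)
    (hz : Function.Injective z) :
    ∃ f : ℂ → ℂ, Differentiable ℂ f ∧ ∀ n, f (z n) ∈ D ∧ f (z n) ≠ g n := by
  have hQ : ∀ n, 0 < ∏ i ∈ Finset.range n, (1 + ‖z i‖) := fun n =>
    Finset.prod_pos fun i _ => by positivity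
  have hp : ∀ n, ∏ i ∈ Finset.range n, (z n - z i) ≠ 0 := fun n =>
    Finset.prod_ne_zero_iff.mpr fun i hi =>
      sub_ne_zero.mpr (hz.ne (Finset.mem_range.mp hi).ne')
  have step : ∀ (n : ℕ) (v : ℂ), ∃ c : ℂ,
      ‖c‖ ≤ 1 / (n.factorial : ℝ) / ∏ i ∈ Finset.range n, (1 + ‖z i‖) ∧
      v + c * ∏ i ∈ Finset.range n, (z n - z i) ∈ D ∧
      v + c * ∏ i ∈ Finset.range n, (z n - z i) ≠ g n := fun n v =>
    exists_small_coeff hD v _ (g n) (hp n)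
      (div_pos (one_div_pos.mpr (by exact_mod_cast n.factorial_pos)) (hQ n))
  choose c hc hcD hcg using step
  -- `P n` is the `n`-th partial sum of the series; the next coefficient depends on `P n (z n)`.
  let P : ℕ → ℂ → ℂ := fun n => Nat.rec (fun _ => 0)
    (fun n Pn w => Pn w + c n (Pn (z n)) * ∏ i ∈ Finset.range n, (w - z i)) n
  let a : ℕ → ℂ := fun n => c n (P n (z n))
  have hP : ∀ n w, P n w = ∑ m ∈ Finset.range n, a m * ∏ i ∈ Finset.range m, (w - z i) := by
    intro n w
    induction n with
    | zero => rfl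
    | succ n ih => rw [Finset.sum_range_succ, ← ih]
  refine ⟨fun w => ∑' n, a n * ∏ i ∈ Finset.range n, (w - z i),
    differentiable_newton_series z a fun n => (le_div_iff₀ (hQ n)).mp (hc n _), fun n => ?_⟩
  have hval : ∑' m, a m * ∏ i ∈ Finset.range m, (z n - z i) =
      P n (z n) + c n (P n (z n)) * ∏ i ∈ Finset.range n, (z n - z i) := by
    rw [tsum_eq_sum (s := Finset.range (n + 1)), Finset.sum_range_succ, ← hP]
    intro m hm
    have hnm : n ∈ Finset.range m := by
      rw [Finset.mem_range] at hm ⊢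
      omega
    rw [Finset.prod_eq_zero hnm (sub_self _), mul_zero]
  simp only [hval]
  exact ⟨hcD n _, hcg n _⟩

/-- The step of the transfinite recursion: `S` is the set of earlier points and `G` the set of
functions already chosen. -/
lemma exists_entire_of_countable {D : Set ℂ} (hD : Dense D) (S : Set ℂ) (hS : S.Countable)
    (G : Set (ℂ → ℂ)) (hG : G.Countable) :
    ∃ f : ℂ → ℂ, Differentiable ℂ f ∧ (∀ w ∈ S, f w ∈ D) ∧ f ∉ G := by
  -- Adding the natural numbers to `S` makes it infinite, so that each element of `G` can be
  -- excluded at a point of its own.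
  have hinf : (S ∪ Set.range ((↑) : ℕ → ℂ)).Infinite :=
    (Set.infinite_range_of_injective Nat.cast_injective).mono Set.subset_union_right
  have hcount : (S ∪ Set.range ((↑) : ℕ → ℂ)).Countable := hS.union (Set.countable_range _)
  have := hinf.to_subtype
  have := hcount.to_subtype
  obtain ⟨e⟩ := nonempty_equiv_of_countable (α := ℕ) (β := ↥(S ∪ Set.range ((↑) : ℕ → ℂ)))
  obtain ⟨g, hg⟩ := Set.countable_iff_exists_subset_range.mp hG
  obtain ⟨f, hf, hfz⟩ := exists_entire_of_seq hD (fun n => (e n : ℂ)) (fun n => g n (e n))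
    (Subtype.val_injective.comp e.injective)
  refine ⟨f, hf, fun w hw => ?_, fun hfG => ?_⟩
  · have := (hfz (e.symm ⟨w, Or.inl hw⟩)).1
    simpa using this
  · obtain ⟨n, rfl⟩ := hg hfG
    exact (hfz n).2 rfl

/-- A well-order of `ℂ` of the least possible order type works: this type is the initial ordinal of
`𝔠 = ℵ₁`, so proper initial segments have cardinality less than `ℵ₁`. -/
lemma exists_wellOrder_countable_initial
    (ch : Cardinal.continuum.{0} = Cardinal.aleph.{0} 1) :
    ∃ r : ℂ → ℂ → Prop, IsWellOrder ℂ r ∧ ∀ x, {y | r y x}.Countable := by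
  obtain ⟨r, hr, hord⟩ := Cardinal.exists_ord_eq ℂ
  refine ⟨r, hr, fun x => ?_⟩
  have h := Cardinal.card_typein_lt (r := r) x hord
  rw [Cardinal.mk_complex, ch, Cardinal.lt_aleph_one_iff] at h
  exact Cardinal.le_aleph0_iff_set_countable.mp h

/-- **Wetzel's problem, CH direction**: assuming the continuum hypothesis, there is a family `F`
of entire functions `ℂ → ℂ` of cardinality the continuum (in particular uncountable) that is
pointwise countable: for every `z`, the set of values `{f z : f ∈ F}` is countable. -/
theorem wetzel_of_CH (ch : Cardinal.continuum = Cardinal.aleph 1) :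
    ∃ F : Set (ℂ → ℂ), (∀ f ∈ F, Differentiable ℂ f) ∧
      Cardinal.mk F = Cardinal.continuum ∧ ¬ F.Countable ∧
      ∀ z : ℂ, ((fun f : ℂ → ℂ => f z) '' F).Countable := by
  -- `ch` lives in an arbitrary universe; the cardinality of `ℂ` is in universe `0`.
  have ch₀ : Cardinal.continuum.{0} = Cardinal.aleph.{0} 1 :=
    Cardinal.lift_injective (by simpa using ch)
  obtain ⟨r, hr, hcount⟩ := exists_wellOrder_countable_initial ch₀
  obtain ⟨D, hDc, hD⟩ := TopologicalSpace.exists_countable_dense ℂ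
  have hwf : WellFounded r := hr.wf
  choose Φ hΦ hΦD hΦG using exists_entire_of_countable hD
  have hcountRange : ∀ x (h : {y | r y x} → ℂ → ℂ), (Set.range h).Countable := fun x h => by
    have := (hcount x).to_subtype
    exact Set.countable_range h
  have hrec : ∃ f : ℂ → ℂ → ℂ, ∀ x, Differentiable ℂ (f x) ∧ (∀ y, r y x → f x y ∈ D) ∧
      ∀ y, r y x → f x ≠ f y := by
    let step : ∀ x, (∀ y, r y x → ℂ → ℂ) → ℂ → ℂ := fun x ih =>
      Φ {y | r y x} (hcount x) (Set.range fun y : {y | r y x} => ih y y.2)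
        (hcountRange x _)
    refine ⟨hwf.fix step, fun x => ?_⟩
    rw [hwf.fix_eq]
    refine ⟨hΦ _ _ _ _, hΦD _ _ _ _, fun y hy heq => ?_⟩
    exact hΦG {y | r y x} (hcount x) (Set.range fun y : {y | r y x} => hwf.fix step y)
      (hcountRange x _) ⟨⟨y, hy⟩, heq.symm⟩
  obtain ⟨f, hf⟩ := hrec
  have hinj : Function.Injective f := by
    intro x y hxy
    rcases trichotomous_of r x y with h | h | h
    · exact absurd hxy.symm ((hf y).2.2 x h)
    · exact h
    · exact absurd hxy ((hf x).2.2 y h)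
  have hcard : Cardinal.mk (Set.range f) = Cardinal.continuum := by
    rw [Cardinal.mk_range_eq f hinj, Cardinal.mk_complex]
  refine ⟨Set.range f, ?_, hcard, fun h => ?_, fun z => ?_⟩
  · rintro _ ⟨x, rfl⟩
    exact (hf x).1
  · have := Cardinal.le_aleph0_iff_set_countable.mpr h
    rw [hcard] at this
    exact Cardinal.aleph0_lt_continuum.not_ge this
  · refine (hDc.union (((hcount z).insert z).image fun x => f x z)).mono ?_
    rintro _ ⟨_, ⟨x, rfl⟩, rfl⟩
    rcases trichotomous_of r x z with h | h | h
    · exact Or.inr ⟨x, Or.inr h, rfl⟩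
    · exact Or.inr ⟨x, Or.inl h, rfl⟩
    · exact Or.inl ((hf x).2.1 z h)
end

section
/- Assume the continuum hypothesis fails. Then every set F of entire functions ℂ → ℂ (functions analytic on all of ℂ) such that for every z ∈ ℂ the set {f z : f ∈ F} is countable, is itself countable. -/
/-!
Suppose `F` is uncountable and pick `G ⊆ F` with `#G = ℵ₁`. By the identity principle two distinct
entire functions agree only on a countable set (`countable_setOf_eq_of_differentiable`), so the
points at which some two members of `G` agree number at most `ℵ₁ * ℵ₁ * ℵ₀ = ℵ₁`. As `𝔠 ≠ ℵ₁`, this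
is less than `#ℂ`, and there is a point `z` at which all members of `G` take different values. Then
`G` embeds in the countable set of values of `F` at `z`, which is absurd.
-/

/-- Two distinct entire functions agree only on a countable set: that set is discrete by the
identity principle, and `ℂ` is hereditarily Lindelöf. -/
theorem countable_setOf_eq_of_differentiable {f g : ℂ → ℂ} (hf : Differentiable ℂ f)
    (hg : Differentiable ℂ g) (hfg : f ≠ g) : {z | f z = g z}.Countable := by
  have hfa : AnalyticOnNhd ℂ f Set.univ := fun z _ => hf.analyticAt z
  have hga : AnalyticOnNhd ℂ g Set.univ := fun z _ => hg.analyticAt z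
  rcases hfa.eqOn_or_eventually_ne_of_preconnected hga isPreconnected_univ with h | h
  · exact absurd (funext fun z => h (Set.mem_univ z)) hfg
  · have hd : IsDiscrete {z | f z = g z} := by
      have hd' := isDiscrete_of_codiscreteWithin (s := {z | f z = g z}) h
      rwa [Set.inter_univ] at hd'
    exact (HereditarilyLindelofSpace.isLindelof _).countable_of_isDiscrete hd

/-- **Wetzel's problem, ¬CH direction**: if the continuum hypothesis fails, then every family `F`
of entire functions `ℂ → ℂ` that is pointwise countable (for every `z`, the set of values
`{f z : f ∈ F}` is countable) is itself countable. -/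
theorem wetzel_of_not_CH (ch : Cardinal.continuum ≠ Cardinal.aleph 1)
    (F : Set (ℂ → ℂ)) (hF : ∀ f ∈ F, Differentiable ℂ f)
    (hc : ∀ z : ℂ, ((fun f : ℂ → ℂ => f z) '' F).Countable) :
    F.Countable := by
  -- `ch` lives in an arbitrary universe, whereas `#ℂ` is a cardinal in `Type`.
  have ch0 : Cardinal.aleph.{0} 1 < Cardinal.continuum.{0} := by
    refine lt_of_le_of_ne Cardinal.aleph_one_le_continuum fun h => ch ?_
    have h' := congrArg Cardinal.lift h
    rw [Cardinal.lift_continuum, Cardinal.lift_aleph, Ordinal.lift_one] at h'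
    exact h'.symm
  by_contra hunc
  rw [← Cardinal.le_aleph0_iff_set_countable, not_le, ← Order.succ_le_iff,
    Cardinal.succ_aleph0, Cardinal.le_mk_iff_exists_subset] at hunc
  obtain ⟨G, hGF, hG⟩ := hunc
  have hle : Cardinal.mk (⋃ p : {p : G × G // p.1.1 ≠ p.2.1}, {z | p.1.1.1 z = p.1.2.1 z})
      ≤ Cardinal.aleph 1 := by
    refine (Cardinal.mk_iUnion_le _).trans ?_
    have h0 := Cardinal.aleph0_le_aleph 1
    have h1 : Cardinal.mk {p : G × G // p.1.1 ≠ p.2.1} ≤ Cardinal.aleph 1 := by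
      refine (Cardinal.mk_subtype_le _).trans ?_
      rw [Cardinal.mk_prod, Cardinal.lift_id, hG, Cardinal.mul_eq_self h0]
    refine (mul_le_mul' h1 (ciSup_le' fun p => ?_)).trans (Cardinal.mul_eq_self h0).le
    exact (countable_setOf_eq_of_differentiable (hF _ (hGF p.1.1.2)) (hF _ (hGF p.1.2.2))
      p.2).le_aleph0.trans h0
  obtain ⟨z, hz⟩ : ∃ z, z ∉ ⋃ p : {p : G × G // p.1.1 ≠ p.2.1}, {z | p.1.1.1 z = p.1.2.1 z} := by
    by_contra! h
    rw [Set.eq_univ_of_forall h, Cardinal.mk_univ_complex] at hle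
    exact hle.not_gt ch0
  have hinj : Set.InjOn (fun f : ℂ → ℂ => f z) G := fun f hf g hg hfg => by
    by_contra hne
    exact hz (Set.mem_iUnion.2 ⟨⟨(⟨f, hf⟩, ⟨g, hg⟩), hne⟩, hfg⟩)
  have hGc : G.Countable :=
    Set.countable_of_injective_of_countable_image hinj ((hc z).mono (Set.image_mono hGF))
  rw [← Cardinal.le_aleph0_iff_set_countable, hG] at hGc
  exact hGc.not_gt Cardinal.aleph0_lt_aleph_one
end

section
/- Let M be an infinite subset of ℕ and let F be a thin family of finite subsets of ℕ, i.e. no member of F is a proper initial segment (in increasing order) of another member. Then for every colouring c : Finset ℕ → Fin 2 there exists an infinite subset M' ⊆ M such that c is constant on the set of all members of F that are subsets of M'. -/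
/-!
The proof is Galvin's combinatorial forcing. Fix a family `G` of finite sets. An infinite set `X`
accepts a finite set `s` if `s ∪ Y` has an initial segment in `G` for every infinite `Y ⊆ X` lying
above `s`, and rejects `s` if no infinite subset of `X` accepts `s`. Some infinite subset of any
given set accepts or rejects `s`, and a diagonal argument (`exists_fusion`) yields an infinite `X`
that decides all its finite subsets at once. If `X` accepts `∅`, every infinite subset of `X` has
an initial segment in `G`. If `X` rejects `∅`, then, because a rejected `s ⊆ X` has only finitely
many accepted extensions `insert n s`, a second fusion gives an infinite subset of `X` all of whose
finite subsets are rejected; since members of `G` are accepted, it contains no member of `G`.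

This dichotomy (`exists_dichotomy`) is applied to the members of `F` of colour `0`. In the second
case every member of `F` inside the set obtained has colour `1`. In the first case, extend a member
`s ⊆ X` of `F` to an infinite set by the elements of `X` above it: this set has an initial segment
`t ∈ F` of colour `0`, and as `s` and `t` are initial segments of the same set, thinness gives
`s = t`.
-/

/-- `s` is an initial segment of `t`: `s ⊆ t` and every element of `s` is smaller than every
element of `t` not in `s`, i.e. `s` consists of the `|s|` smallest elements of `t`. -/
def IsInitialSegment (s t : Finset ℕ) : Prop :=
  s ⊆ t ∧ ∀ x ∈ s, ∀ y ∈ t, y ∉ s → x < y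

/-- A family of finite subsets of `ℕ` is thin if no member is a proper initial segment of
another member. -/
def IsThinFamily (F : Set (Finset ℕ)) : Prop :=
  ∀ s ∈ F, ∀ t ∈ F, s ≠ t → ¬ IsInitialSegment s t

namespace NashWilliams

/-- Some member of `G` is an initial segment of the (typically infinite) set `Y`. -/
def HasInit (G : Set (Finset ℕ)) (Y : Set ℕ) : Prop :=
  ∃ t ∈ G, ↑t ⊆ Y ∧ ∀ x ∈ t, ∀ y ∈ Y, y ∉ t → x < y

/-- `X` accepts `s`: for every infinite `Y ⊆ X` above `s`, the set `s ∪ Y` has an initial segment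
in `G`. The set `s` need not be contained in `X`, and only the part of `X` above `s` matters. -/
def Accepts (G : Set (Finset ℕ)) (X : Set ℕ) (s : Finset ℕ) : Prop :=
  ∀ Y ⊆ X, Y.Infinite → (∀ x ∈ s, ∀ y ∈ Y, x < y) → HasInit G (↑s ∪ Y)

/-- `X` rejects `s`: no infinite subset of `X` accepts `s`. -/
def Rejects (G : Set (Finset ℕ)) (X : Set ℕ) (s : Finset ℕ) : Prop :=
  ∀ Y ⊆ X, Y.Infinite → ¬ Accepts G Y s

theorem infinite_above {X : Set ℕ} (hX : X.Infinite) (s : Finset ℕ) :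
    {y ∈ X | ∀ x ∈ s, x < y}.Infinite := by
  refine (hX.sdiff (Set.finite_Iic (s.sup id))).mono ?_
  rintro y ⟨hy, hys⟩
  refine ⟨hy, fun x hx => ?_⟩
  have h : x ≤ s.sup id := Finset.le_sup (f := id) hx
  simp only [Set.mem_Iic, not_le] at hys
  omega

theorem Accepts.mono {G : Set (Finset ℕ)} {X Y : Set ℕ} {s : Finset ℕ}
    (h : ∀ y ∈ Y, (∀ x ∈ s, x < y) → y ∈ X) (hX : Accepts G X s) : Accepts G Y s :=
  fun Z hZY hZ hsZ =>
    hX Z (fun z hz => h z (hZY hz) fun x hx => hsZ x hx z hz) hZ hsZ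

theorem Rejects.mono {G : Set (Finset ℕ)} {X Y : Set ℕ} {s : Finset ℕ}
    (h : ∀ y ∈ Y, (∀ x ∈ s, x < y) → y ∈ X) (hX : Rejects G X s) : Rejects G Y s :=
  fun Z hZY hZ hacc =>
    hX {y ∈ Z | ∀ x ∈ s, x < y} (fun y hy => h y (hZY hy.1) hy.2) (infinite_above hZ s)
      (hacc.mono fun _ hy _ => hy.1)

theorem accepts_of_mem {G : Set (Finset ℕ)} {s : Finset ℕ} (hs : s ∈ G) (X : Set ℕ) :
    Accepts G X s := by
  refine fun Y _ _ hsY => ⟨s, hs, Set.subset_union_left, fun x hx y hy hys => ?_⟩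
  rcases hy with hy | hy
  · exact absurd hy hys
  · exact hsY x hx y hy

/-- If a property `P s X` passes to any set whose part above `s` lies in `X`, and can be achieved
for each single `s` by shrinking `X`, then some infinite `X ⊆ M` has it for all finite `s ⊆ X`. -/
theorem exists_fusion {P : Finset ℕ → Set ℕ → Prop}
    (hmono : ∀ s X Y, (∀ y ∈ Y, (∀ x ∈ s, x < y) → y ∈ X) → P s X → P s Y)
    (hex : ∀ s X, X.Infinite → ∃ Y ⊆ X, Y.Infinite ∧ P s Y)
    {M : Set ℕ} (hM : M.Infinite) :
    ∃ X ⊆ M, X.Infinite ∧ ∀ s : Finset ℕ, ↑s ⊆ X → P s X := by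
  have hfin : ∀ S : Finset (Finset ℕ), ∀ X : Set ℕ, X.Infinite →
      ∃ Y ⊆ X, Y.Infinite ∧ ∀ s ∈ S, P s Y := by
    intro S
    induction S using Finset.induction_on with
    | empty => exact fun X hX => ⟨X, subset_rfl, hX, by simp⟩
    | insert a S _ ih =>
      intro X hX
      obtain ⟨Y, hYX, hY, hPY⟩ := ih X hX
      obtain ⟨Z, hZY, hZ, hPZ⟩ := hex a Y hY
      refine ⟨Z, hZY.trans hYX, hZ, fun s hs => ?_⟩
      rcases Finset.mem_insert.1 hs with rfl | hs
      · exact hPZ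
      · exact hmono s Y Z (fun y hy _ => hZY hy) (hPY s hs)
  have hstep : ∀ X : {X : Set ℕ // X.Infinite}, ∃ Y : {X : Set ℕ // X.Infinite},
      Y.1 ⊆ X.1 ∧ (∀ y ∈ Y.1, sInf X.1 < y) ∧
        ∀ s ∈ (Finset.range (sInf X.1 + 1)).powerset, P s Y.1 := by
    rintro ⟨X, hX⟩
    obtain ⟨Y, hYX, hY, hP⟩ := hfin (Finset.range (sInf X + 1)).powerset _
      (infinite_above hX {sInf X})
    exact ⟨⟨Y, hY⟩, fun y hy => (hYX hy).1, fun y hy => (hYX hy).2 _ (by simp), hP⟩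
  choose f hf_sub hf_lt hf_P using hstep
  -- The recursion only handles nonempty `s`, so `P ∅` is arranged at the start.
  obtain ⟨X₀, hX₀M, hX₀, hP₀⟩ := hex ∅ M hM
  let A : ℕ → {X : Set ℕ // X.Infinite} := fun n => f^[n] ⟨X₀, hX₀⟩
  have hA : ∀ n, A (n + 1) = f (A n) := fun n => Function.iterate_succ_apply' f n _
  have hanti : Antitone fun n => (A n).1 :=
    antitone_nat_of_succ_le fun n => by
      change (A (n + 1)).1 ⊆ (A n).1
      rw [hA]
      exact hf_sub _
  have hmem : ∀ n, sInf (A n).1 ∈ (A n).1 := fun n => Nat.sInf_mem (A n).2.nonempty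
  have hstrict : StrictMono fun n => sInf (A n).1 :=
    strictMono_nat_of_lt_succ fun n => by
      apply hf_lt (A n)
      rw [← hA]
      exact hmem _
  have hsub : Set.range (fun n => sInf (A n).1) ⊆ X₀ := by
    rintro _ ⟨n, rfl⟩
    exact hanti (Nat.zero_le n) (hmem n)
  refine ⟨_, hsub.trans hX₀M, Set.infinite_range_of_injective hstrict.injective, fun s hs => ?_⟩
  rcases s.eq_empty_or_nonempty with rfl | hne
  · exact hmono ∅ X₀ _ (fun y hy _ => hsub hy) hP₀
  · obtain ⟨k, hk⟩ := hs (s.max'_mem hne)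
    dsimp only at hk
    refine hmono s (A (k + 1)).1 _ ?_ ?_
    · rintro _ ⟨j, rfl⟩ hj
      have h := hj _ (s.max'_mem hne)
      rw [← hk] at h
      exact hanti (hstrict.lt_iff_lt.1 h) (hmem j)
    · rw [hA]
      refine hf_P _ s (Finset.mem_powerset.2 fun x hx => ?_)
      rw [Finset.mem_range, hk]
      exact Nat.lt_succ_of_le (s.le_max' x hx)

/-- If `X` accepts `insert n s` for all `n ∈ Y ⊆ X`, then `Y` accepts `s`: split off the least
element of an infinite subset of `Y`. -/
theorem accepts_of_insert {G : Set (Finset ℕ)} {X Y : Set ℕ} {s : Finset ℕ} (hYX : Y ⊆ X)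
    (h : ∀ n ∈ Y, Accepts G X (insert n s)) : Accepts G Y s := by
  intro Z hZY hZ hsZ
  have hm : sInf Z ∈ Z := Nat.sInf_mem hZ.nonempty
  have key := h _ (hZY hm) {y ∈ Z | ∀ x ∈ insert (sInf Z) s, x < y}
    (fun y hy => hYX (hZY hy.1)) (infinite_above hZ _) (fun x hx y hy => hy.2 x hx)
  convert key using 1
  ext y
  simp only [Set.mem_union, Finset.mem_coe, Finset.mem_insert, Set.mem_ofPred_eq]
  constructor
  · rintro (hy | hy)
    · exact Or.inl (Or.inr hy)
    · rcases (Nat.sInf_le hy).eq_or_lt with he | hl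
      · exact Or.inl (Or.inl he.symm)
      · refine Or.inr ⟨hy, ?_⟩
        rintro x (rfl | hx)
        · exact hl
        · exact hsZ x hx y hy
  · rintro ((rfl | hy) | hy)
    · exact Or.inr hm
    · exact Or.inl hy
    · exact Or.inr hy.1

/-- Galvin's lemma: on some infinite `X`, either `G` meets the initial segments of every infinite
subset of `X`, or `G` has no member inside `X`. -/
theorem exists_dichotomy (G : Set (Finset ℕ)) {M : Set ℕ} (hM : M.Infinite) :
    ∃ X ⊆ M, X.Infinite ∧
      ((∀ Y ⊆ X, Y.Infinite → HasInit G Y) ∨ ∀ s ∈ G, ¬ (↑s ⊆ X)) := by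
  obtain ⟨X, hXM, hX, hdec⟩ := exists_fusion (P := fun s X => Accepts G X s ∨ Rejects G X s)
    (fun s X Y h => Or.imp (Accepts.mono h) (Rejects.mono h))
    (fun s X hX => by
      by_cases h : Rejects G X s
      · exact ⟨X, subset_rfl, hX, Or.inr h⟩
      · simp only [Rejects, not_forall, not_not] at h
        obtain ⟨Y, hYX, hY, hacc⟩ := h
        exact ⟨Y, hYX, hY, Or.inl hacc⟩) hM
  rcases hdec ∅ (by simp) with hacc | hrej
  · refine ⟨X, hXM, hX, Or.inl fun Y hYX hY => ?_⟩
    simpa using hacc Y hYX hY (by simp)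
  -- The set doing the rejecting stays `X`, so that the property below is hereditary in `Y`.
  obtain ⟨Y, hYX, hY, hP⟩ := exists_fusion
    (P := fun s Y => ↑s ⊆ X → Rejects G X s →
      ∀ n ∈ Y, n ∈ X → (∀ x ∈ s, x < n) → Rejects G X (insert n s))
    (fun s A B h hA hsX hr n hn hnX hsn => hA hsX hr n (h n hn hsn) hnX hsn)
    (fun s A hA => by
      by_cases hs : ↑s ⊆ X ∧ Rejects G X s
      · obtain ⟨hsX, hr⟩ := hs
        have hbad : {n ∈ X | ¬ Rejects G X (insert n s)}.Finite := by
          by_contra hinf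
          refine hr _ (fun n hn => hn.1) hinf
            (accepts_of_insert (X := X) (fun n hn => hn.1) fun n hn => ?_)
          refine (hdec (insert n s) ?_).resolve_right hn.2
          rw [Finset.coe_insert]
          exact Set.insert_subset hn.1 hsX
        refine ⟨_, Set.sdiff_subset, hA.sdiff hbad, fun _ _ n hn hnX _ => ?_⟩
        by_contra hnr
        exact hn.2 ⟨hnX, hnr⟩
      · exact ⟨A, subset_rfl, hA, fun h₁ h₂ => absurd ⟨h₁, h₂⟩ hs⟩) hX
  have hall : ∀ s : Finset ℕ, ↑s ⊆ Y → Rejects G X s := by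
    intro s
    induction s using Finset.induction_on_max with
    | empty => exact fun _ => hrej
    | insert a s ha ih =>
      intro hs
      rw [Finset.coe_insert, Set.insert_subset_iff] at hs
      exact hP s hs.2 (hs.2.trans hYX) (ih hs.2) a hs.1 (hYX hs.1) ha
  exact ⟨Y, hYX.trans hXM, hY,
    Or.inr fun s hs hsY => hall s hsY X subset_rfl hX (accepts_of_mem hs X)⟩

end NashWilliams

/-- **The Nash-Williams partition theorem**: given an infinite set `M ⊆ ℕ`, a thin family `F` of
finite subsets of `ℕ`, and a 2-colouring `c` of finite subsets of `ℕ`, there is an infinite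
`M' ⊆ M` such that `c` is constant on the members of `F` that are subsets of `M'`. -/
theorem nash_williams_partition (M : Set ℕ) (hM : M.Infinite)
    (F : Set (Finset ℕ)) (hF : IsThinFamily F) (c : Finset ℕ → Fin 2) :
    ∃ M' ⊆ M, M'.Infinite ∧ ∃ i : Fin 2, ∀ s ∈ F, ↑s ⊆ M' → c s = i := by
  obtain ⟨X, hXM, hX, h | h⟩ := NashWilliams.exists_dichotomy {s | s ∈ F ∧ c s = 0} hM
  · refine ⟨X, hXM, hX, 0, fun s hs hsX => ?_⟩
    obtain ⟨t, ⟨htF, htc⟩, htY, ht⟩ := h (↑s ∪ {y ∈ X | ∀ x ∈ s, x < y})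
      (Set.union_subset hsX fun y hy => hy.1)
      ((NashWilliams.infinite_above hX s).mono Set.subset_union_right)
    suffices s = t by rwa [this]
    by_contra hne
    by_cases hst : s ⊆ t
    · refine hF s hs t htF hne ⟨hst, fun x hx y hy hys => ?_⟩
      exact ((htY hy).resolve_left hys).2 x hx
    · refine hF t htF s hs (Ne.symm hne)
        ⟨fun y hy => ?_, fun x hx y hy hyt => ht x hx y (Or.inl hy) hyt⟩
      -- Some `z ∈ s` lies outside `t`, hence above all of `t`; so `t` has no element above `s`.
      obtain ⟨z, hzs, hzt⟩ := Finset.not_subset.1 hst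
      rcases htY hy with hys | hys
      · exact hys
      · exact absurd (ht y hy z (Or.inl hzs) hzt) (hys.2 z hzs).asymm
  · refine ⟨X, hXM, hX, 1, fun s hs hsX => ?_⟩
    have hc : c s ≠ 0 := fun hc => h s ⟨hs, hc⟩ hsX
    omega
end

section
/- Let p be a nonzero polynomial with real coefficients and let a < b be real numbers. Let V(x) denote the number of sign changes (ignoring zeros) in the sequence p(x), p'(x), …, p^(d)(x), where d = deg p. Then the number of roots of p in the interval (a, b], counted with multiplicity, is at most V(a) − V(b), and the difference V(a) − V(b) minus this number of roots is even. -/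
/-!
The theorem is proved by induction on the degree, passing from `p` to `p'`. Write `x⁺` for points
immediately to the right of `x`. The first nonzero term of `p(x), p'(x), …` has the sign of `p` at
`x⁺` (`exists_filter_derivSeq`), so prepending `p(x)` to the sequence of `p'` creates a sign change
exactly when `p p'` is negative at `x⁺`: a zero `p(x)` creates none, and indeed `p` and `p'` then
agree in sign at `x⁺`. Hence `V_p(x) = V_{p'}(x) + s(x)`, where the bit `s(x)` is
`negRight (p * p') x` (`budanFourierV_eq_add`).

With `N_f` the number of roots of `f` in `(a, b]`, the induction step thus amounts to
`N_p + s(b) ≤ N_{p'} + s(a)`, with both sides of the same parity.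

* Parity (`even_rootsIoc_add`): by the factorization of `f = p p'` into linear factors and a
  root-free polynomial, the sign of `f` changes from `a⁺` to `b⁺` once for each root in `(a, b]`.
* Inequality (`rolle_Ioc`): both sides are additive in the interval, so one may cut `(a, b]` at the
  roots of `p p'` and suppose there are none in the open interval (`rolle_local`). If `p(b) = 0`,
  then `s(a) = 1`, `s(b) = 0`, and the multiplicity of `b` drops by one from `p` to `p'`. If
  `p(b) ≠ 0`, then `N_p = 0`, and the inequality could only fail with `N_{p'} = 0`, where parity
  gives `s(a) = s(b)`.
-/


/-- The number of sign changes of a finite sequence of reals: delete all zero entries and count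
the number of consecutive pairs with opposite signs. -/
noncomputable def signChanges (l : List ℝ) : ℕ :=
  let l' := l.filter fun x => x ≠ 0
  ((l'.zip l'.tail).filter fun q => q.1 * q.2 < 0).length

/-- `V(x)` for the Budan–Fourier theorem: the number of sign changes in the sequence
`p(x), p'(x), …, p^(d)(x)` where `d = deg p`. -/
noncomputable def budanFourierV (p : Polynomial ℝ) (x : ℝ) : ℕ :=
  signChanges ((List.range (p.natDegree + 1)).map
    fun i => (Polynomial.derivative^[i] p).eval x)

open Polynomial Filter Topology

/-- The number of roots of `f` in `(a, b]`, counted with multiplicity. -/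
noncomputable def rootsIoc (f : ℝ[X]) (a b : ℝ) : ℕ :=
  Multiset.card (f.roots.filter fun x => a < x ∧ x ≤ b)

open Classical in
/-- The sign of `f` immediately to the right of `x`, as a bit: `1` if `f` is negative there and
`0` otherwise. -/
noncomputable def negRight (f : ℝ[X]) (x : ℝ) : ℕ :=
  if ∀ᶠ y in 𝓝[>] x, f.eval y < 0 then 1 else 0

lemma negRight_le_one (f : ℝ[X]) (x : ℝ) : negRight f x ≤ 1 := by
  unfold negRight; split_ifs <;> simp

lemma negRight_of_neg {f : ℝ[X]} {x : ℝ} (h : ∀ᶠ y in 𝓝[>] x, f.eval y < 0) :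
    negRight f x = 1 := if_pos h

lemma negRight_of_pos {f : ℝ[X]} {x : ℝ} (h : ∀ᶠ y in 𝓝[>] x, 0 < f.eval y) :
    negRight f x = 0 := by
  refine if_neg fun h' => ?_
  obtain ⟨y, h1, h2⟩ := (h.and h').exists
  exact lt_asymm h1 h2

/-! ### Signs of a polynomial and roots in an interval -/

lemma mul_pos_of_no_root {q : ℝ[X]} {x y : ℝ}
    (h : ∀ z ∈ Set.uIcc x y, q.eval z ≠ 0) : 0 < q.eval x * q.eval y := by
  by_contra! hneg
  have h0 : (0 : ℝ) ∈ Set.uIcc (q.eval x) (q.eval y) := by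
    rw [Set.mem_uIcc]
    rcases mul_nonpos_iff.1 hneg with h | h
    · exact Or.inr ⟨h.2, h.1⟩
    · exact Or.inl h
  obtain ⟨z, hz, hz0⟩ := intermediate_value_uIcc q.continuous.continuousOn h0
  exact h z hz hz0

/-- Each root to the right of `x` flips the sign of the product once at `x⁺`. -/
lemma eventually_sign_prod (s : Multiset ℝ) (x : ℝ) :
    ∀ᶠ y in 𝓝[>] x,
      0 < (-1 : ℝ) ^ Multiset.card (s.filter (x < ·)) *
        ((s.map fun r => X - C r).prod).eval y := by
  induction s using Multiset.induction_on with
  | empty => simp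
  | cons r s ih =>
    by_cases hr : x < r
    · filter_upwards [ih, Ioo_mem_nhdsGT hr] with y hy hyr
      simp only [Multiset.filter_cons_of_pos s hr, Multiset.card_cons, Multiset.map_cons,
        Multiset.prod_cons, eval_mul, eval_sub, eval_X, eval_C, pow_succ]
      nlinarith [mul_pos hy (sub_pos.2 hyr.2)]
    · filter_upwards [ih, self_mem_nhdsWithin] with y hy hyx
      have hyr : r < y := lt_of_le_of_lt (not_lt.1 hr) hyx
      simp only [Multiset.filter_cons_of_neg s hr, Multiset.map_cons,
        Multiset.prod_cons, eval_mul, eval_sub, eval_X, eval_C]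
      nlinarith [mul_pos hy (sub_pos.2 hyr)]

/-- The sign of `f` at `x⁺` is a constant `c` (the sign of the root-free factor of `f`) times
`-1` to the number of roots beyond `x`. -/
lemma exists_eventually_sign {f : ℝ[X]} (hf : f ≠ 0) :
    ∃ c : ℝ, ∀ x, ∀ᶠ y in 𝓝[>] x,
      0 < c * (-1 : ℝ) ^ Multiset.card (f.roots.filter (x < ·)) * f.eval y := by
  obtain ⟨q, hq, -, hq0⟩ := exists_prod_multiset_X_sub_C_mul f
  have hqne : q ≠ 0 := by rintro rfl; simp at hq; exact hf hq.symm
  have hroot : ∀ z, q.eval z ≠ 0 := fun z hz => by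
    have : z ∈ q.roots := (mem_roots hqne).2 hz
    simp [hq0] at this
  refine ⟨q.eval 0, fun x => ?_⟩
  filter_upwards [eventually_sign_prod f.roots x] with y hy
  have h2 : 0 < q.eval 0 * q.eval y := mul_pos_of_no_root fun z _ => hroot z
  have h3 : f.eval y = ((f.roots.map fun r => X - C r).prod).eval y * q.eval y := by
    rw [← eval_mul, hq]
  rw [h3]
  nlinarith [mul_pos hy h2]

/-- Any number `e` having the sign of `f` at `x⁺` determines `negRight f x`. -/
lemma negRight_eq_ite {f : ℝ[X]} {x e : ℝ} (h : ∀ᶠ y in 𝓝[>] x, 0 < e * f.eval y) :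
    negRight f x = if e < 0 then 1 else 0 := by
  split_ifs with he
  · exact negRight_of_neg (h.mono fun y hy => by nlinarith)
  · exact negRight_of_pos (h.mono fun y hy => pos_of_mul_pos_right hy (not_lt.1 he))

lemma eventually_pos_or_neg {f : ℝ[X]} (hf : f ≠ 0) (x : ℝ) :
    (∀ᶠ y in 𝓝[>] x, 0 < f.eval y) ∨ ∀ᶠ y in 𝓝[>] x, f.eval y < 0 := by
  obtain ⟨c, hc⟩ := exists_eventually_sign hf
  set e := c * (-1 : ℝ) ^ Multiset.card (f.roots.filter (x < ·))
  rcases le_total 0 e with he | he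
  · exact Or.inl ((hc x).mono fun y hy => pos_of_mul_pos_right hy he)
  · exact Or.inr ((hc x).mono fun y hy => by nlinarith)

/-- Passing from `a⁺` to `b⁺`, the sign of `f` changes once for each root in `(a, b]`. -/
lemma even_rootsIoc_add {f : ℝ[X]} (hf : f ≠ 0) {a b : ℝ} (hab : a ≤ b) :
    Even (rootsIoc f a b + negRight f a + negRight f b) := by
  obtain ⟨c, hc⟩ := exists_eventually_sign hf
  have hcard : Multiset.card (f.roots.filter (a < ·)) =
      rootsIoc f a b + Multiset.card (f.roots.filter (b < ·)) := by
    unfold rootsIoc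
    induction f.roots using Multiset.induction_on with
    | empty => simp
    | cons r s ih =>
      simp only [Multiset.filter_cons, Multiset.card_add, ih]
      by_cases h1 : a < r <;> by_cases h2 : b < r
      all_goals simp [h1, h2, not_le.2, not_lt.1]
      all_goals grind
  have hb := hc b
  have ha := hc a
  rw [hcard, pow_add] at ha
  have hfac : c * ((-1 : ℝ) ^ rootsIoc f a b * (-1) ^ Multiset.card (f.roots.filter (b < ·))) =
      c * (-1) ^ Multiset.card (f.roots.filter (b < ·)) * (-1) ^ rootsIoc f a b := by ring
  rw [hfac] at ha
  set e := c * (-1 : ℝ) ^ Multiset.card (f.roots.filter (b < ·))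
  have he : e ≠ 0 := by
    obtain ⟨y, hy⟩ := hb.exists
    exact left_ne_zero_of_mul hy.ne'
  rw [negRight_eq_ite ha, negRight_eq_ite hb]
  rcases Nat.even_or_odd (rootsIoc f a b) with h | h <;> rw [h.neg_one_pow] <;>
    rcases he.lt_or_gt with he | he <;> grind

lemma rootsIoc_add (f : ℝ[X]) {a b c : ℝ} (hab : a ≤ b) (hbc : b ≤ c) :
    rootsIoc f a c = rootsIoc f a b + rootsIoc f b c := by
  unfold rootsIoc
  induction f.roots using Multiset.induction_on with
  | empty => simp
  | cons r s ih =>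
    simp only [Multiset.filter_cons, Multiset.card_add, ih]
    have : (if a < r ∧ r ≤ c then ({r} : Multiset ℝ) else 0).card =
      (if a < r ∧ r ≤ b then ({r} : Multiset ℝ) else 0).card
      + (if b < r ∧ r ≤ c then ({r} : Multiset ℝ) else 0).card := by
      split_ifs <;> simp <;> grind
    omega

lemma rootsIoc_mul {f g : ℝ[X]} (h : f * g ≠ 0) (a b : ℝ) :
    rootsIoc (f * g) a b = rootsIoc f a b + rootsIoc g a b := by
  unfold rootsIoc
  rw [roots_mul h, Multiset.filter_add, Multiset.card_add]

/-- If the only possible root of `f` in `(a, b]` is `b`, then it counts with its multiplicity. -/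
lemma rootsIoc_eq_rootMultiplicity {f : ℝ[X]} {a b : ℝ} (hab : a < b)
    (h : ∀ z ∈ Set.Ioo a b, f.eval z ≠ 0) :
    rootsIoc f a b = f.rootMultiplicity b := by
  rw [← count_roots, Multiset.count_eq_card_filter_eq, rootsIoc]
  congr 1
  refine Multiset.filter_congr fun x hx => ⟨fun hx' => ?_, fun hx' => ?_⟩
  · by_contra hne
    exact h x ⟨hx'.1, lt_of_le_of_ne hx'.2 (Ne.symm hne)⟩ (isRoot_of_mem_roots hx)
  · subst hx'
    exact ⟨hab, le_rfl⟩

/-! ### A refined Rolle inequality -/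

lemma exists_derivative_mul_eq (p : ℝ[X]) {x y : ℝ} (hxy : x < y) :
    ∃ z ∈ Set.Ioo x y, (derivative p).eval z * (y - x) = p.eval y - p.eval x := by
  obtain ⟨z, hz, h⟩ := exists_deriv_eq_slope (fun t => p.eval t) hxy
    p.continuous.continuousOn p.differentiable.differentiableOn
  refine ⟨z, hz, ?_⟩
  rw [Polynomial.deriv] at h
  rw [h, div_mul_cancel₀ _ (sub_pos.2 hxy).ne']

/-- Just after a root `x` of `p`, the polynomial has the sign of its derivative. -/
lemma eventually_mul_pos_of_root {p : ℝ[X]} {x h : ℝ} (hx : p.eval x = 0)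
    (hd : ∀ᶠ y in 𝓝[>] x, 0 < h * (derivative p).eval y) :
    ∀ᶠ y in 𝓝[>] x, 0 < h * p.eval y := by
  obtain ⟨u, hu, hu'⟩ := mem_nhdsGT_iff_exists_Ioo_subset.1 hd
  filter_upwards [Ioo_mem_nhdsGT hu] with y hy
  obtain ⟨z, hz, hz'⟩ := exists_derivative_mul_eq p hy.1
  have := hu' ⟨hz.1, hz.2.trans hy.2⟩
  simp only [Set.mem_ofPred_eq] at this
  have h2 := mul_pos this (sub_pos.2 hy.1)
  rw [hx, sub_zero] at hz'
  rwa [mul_assoc, hz'] at h2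

lemma negRight_mul_derivative_of_root {p : ℝ[X]} (hd : derivative p ≠ 0) {x : ℝ}
    (hx : p.eval x = 0) : negRight (p * derivative p) x = 0 := by
  apply negRight_of_pos
  rcases eventually_pos_or_neg hd x with h | h
  · have := eventually_mul_pos_of_root (h := 1) hx (by simpa using h)
    filter_upwards [h, this] with y h1 h2
    rw [eval_mul]; nlinarith
  · have := eventually_mul_pos_of_root (h := -1) hx (by simpa using h)
    filter_upwards [h, this] with y h1 h2
    rw [eval_mul]; nlinarith

/-- Just before a root `b` of `p`, the polynomial and its derivative have opposite signs. -/
lemma mul_derivative_neg_of_root {p : ℝ[X]} {a b : ℝ} (hb : p.eval b = 0)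
    (hd : ∀ z ∈ Set.Ioo a b, (derivative p).eval z ≠ 0) {y : ℝ} (hy : y ∈ Set.Ioo a b) :
    (p * derivative p).eval y < 0 := by
  obtain ⟨z, hz, hz'⟩ := exists_derivative_mul_eq p hy.2
  have h1 : 0 < (derivative p).eval z * (derivative p).eval y := by
    refine mul_pos_of_no_root fun w hw => hd w ?_
    rw [Set.uIcc_of_ge hz.1.le] at hw
    exact ⟨hy.1.trans_le hw.1, hw.2.trans_lt hz.2⟩
  have h2 := mul_pos h1 (sub_pos.2 hy.2)
  have h3 : (derivative p).eval z * (derivative p).eval y * (b - y) =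
      -(p.eval y * (derivative p).eval y) := by
    linear_combination (derivative p).eval y * hz' + (derivative p).eval y * hb
  rw [eval_mul]
  linarith

lemma rolle_local {p : ℝ[X]} (hd : derivative p ≠ 0) {a b : ℝ} (hab : a < b)
    (h : ∀ z ∈ Set.Ioo a b, (p * derivative p).eval z ≠ 0) :
    rootsIoc p a b + negRight (p * derivative p) b ≤
      rootsIoc (derivative p) a b + negRight (p * derivative p) a := by
  have hp : p ≠ 0 := by rintro rfl; simp at hd
  have hpd := mul_ne_zero hp hd
  simp only [eval_mul, mul_ne_zero_iff] at h
  have h1 := rootsIoc_eq_rootMultiplicity hab fun z hz => (h z hz).1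
  have h2 := rootsIoc_eq_rootMultiplicity hab fun z hz => (h z hz).2
  by_cases hb : p.eval b = 0
  · have h3 : negRight (p * derivative p) a = 1 := negRight_of_neg <| by
      filter_upwards [Ioo_mem_nhdsGT hab] with y hy
      exact mul_derivative_neg_of_root hb (fun z hz => (h z hz).2) hy
    have h4 := negRight_mul_derivative_of_root hd hb
    have h5 := derivative_rootMultiplicity_of_root (show p.IsRoot b from hb)
    omega
  · have h3 : p.rootMultiplicity b = 0 := rootMultiplicity_eq_zero hb
    have h4 := even_rootsIoc_add hpd hab.le
    rw [rootsIoc_mul hpd] at h4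
    have := negRight_le_one (p * derivative p) a
    have := negRight_le_one (p * derivative p) b
    -- Without a root of `p'` at `b` either, parity forces equality of the two sign bits.
    grind

/-- Rolle's theorem with multiplicities on `(a, b]`: `p` has at most as many roots there as its
derivative, up to a correction by whether `p` and its derivative have opposite signs just after
`a` and just after `b`. -/
lemma rolle_Ioc {p : ℝ[X]} (hd : derivative p ≠ 0) {a b : ℝ} (hab : a < b) :
    rootsIoc p a b + negRight (p * derivative p) b ≤
      rootsIoc (derivative p) a b + negRight (p * derivative p) a := by
  have hp : p ≠ 0 := by rintro rfl; simp at hd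
  have hpd := mul_ne_zero hp hd
  set f := p * derivative p with hf
  induction hn : (f.roots.toFinset.filter fun z => z ∈ Set.Ioo a b).card
    using Nat.strong_induction_on generalizing a b with
  | _ n ih =>
    by_cases h : ∀ z ∈ Set.Ioo a b, f.eval z ≠ 0
    · exact rolle_local hd hab h
    · push Not at h
      obtain ⟨c, hc, hc0⟩ := h
      have hcm : c ∈ f.roots.toFinset := by simpa using ⟨hpd, hc0⟩
      have h1 := ih _ (by
        rw [← hn]
        refine Finset.card_lt_card (Finset.ssubset_iff_of_subset ?_ |>.2 ⟨c, ?_, ?_⟩)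
        · intro z; simp only [Finset.mem_filter, Set.mem_Ioo]
          exact fun hz => ⟨hz.1, hz.2.1, hz.2.2.trans hc.2⟩
        · exact Finset.mem_filter.2 ⟨hcm, hc⟩
        · simp) hc.1 rfl
      have h2 := ih _ (by
        rw [← hn]
        refine Finset.card_lt_card (Finset.ssubset_iff_of_subset ?_ |>.2 ⟨c, ?_, ?_⟩)
        · intro z; simp only [Finset.mem_filter, Set.mem_Ioo]
          exact fun hz => ⟨hz.1, hc.1.trans hz.2.1, hz.2.2⟩
        · exact Finset.mem_filter.2 ⟨hcm, hc⟩
        · simp) hc.2 rfl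
      rw [rootsIoc_add p hc.1.le hc.2.le, rootsIoc_add (derivative p) hc.1.le hc.2.le]
      omega

/-! ### Sign changes in the sequence of derivatives -/

/-- The sequence `p(x), p'(x), …, p^(d)(x)`. -/
noncomputable def derivSeq (p : ℝ[X]) (x : ℝ) : List ℝ :=
  (List.range (p.natDegree + 1)).map fun i => (derivative^[i] p).eval x

lemma derivSeq_of_natDegree_eq_zero {p : ℝ[X]} (h : p.natDegree = 0) (x : ℝ) :
    derivSeq p x = [p.eval x] := by
  simp [derivSeq, h]

lemma derivSeq_cons {p : ℝ[X]} (h : p.natDegree ≠ 0) (x : ℝ) :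
    derivSeq p x = p.eval x :: derivSeq (derivative p) x := by
  have hdeg : (derivative p).natDegree + 1 = p.natDegree := by
    rw [natDegree_derivative]; omega
  rw [derivSeq, derivSeq, hdeg, List.range_succ_eq_map, List.map_cons, List.map_map]
  rfl

/-- The first nonzero term of `p(x), p'(x), …` carries the sign of `p` at `x⁺`. -/
lemma exists_filter_derivSeq {p : ℝ[X]} (hp : p ≠ 0) (x : ℝ) :
    ∃ h t, (derivSeq p x).filter (fun y => y ≠ 0) = h :: t ∧
      ∀ᶠ y in 𝓝[>] x, 0 < h * p.eval y := by
  induction hn : p.natDegree generalizing p with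
  | zero =>
    obtain ⟨c, rfl⟩ := natDegree_eq_zero.1 hn
    have hc : c ≠ 0 := by simpa using hp
    exact ⟨c, [], by simp [derivSeq_of_natDegree_eq_zero hn, hc], by simp [hc]⟩
  | succ n ih =>
    rw [derivSeq_cons (by omega)]
    by_cases hx : p.eval x = 0
    · have hd : derivative p ≠ 0 := fun h => by
        rw [derivative_eq_zero] at h; omega
      obtain ⟨h, t, ht, hs⟩ := ih hd (by rw [natDegree_derivative]; omega)
      exact ⟨h, t, by simpa [hx] using ht, eventually_mul_pos_of_root hx hs⟩
    · refine ⟨p.eval x, (derivSeq (derivative p) x).filter (fun y => y ≠ 0), by simp [hx], ?_⟩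
      have hcont : ContinuousAt (fun y => p.eval x * p.eval y) x := by fun_prop
      exact (hcont.eventually_const_lt (mul_self_pos.2 hx)).filter_mono nhdsWithin_le_nhds

lemma signChanges_zero_cons (l : List ℝ) : signChanges (0 :: l) = signChanges l := by
  simp [signChanges]

lemma signChanges_cons {x h : ℝ} {l t : List ℝ} (hx : x ≠ 0)
    (hl : l.filter (fun y => y ≠ 0) = h :: t) :
    signChanges (x :: l) = signChanges l + if x * h < 0 then 1 else 0 := by
  have h1 : (x :: l).filter (fun y => y ≠ 0) = x :: h :: t := by
    rw [List.filter_cons_of_pos (by simpa using hx), hl]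
  simp only [signChanges, h1, hl]
  split_ifs with hneg <;> simp [hneg]

lemma budanFourierV_eq_add {p : ℝ[X]} (hd : derivative p ≠ 0) (x : ℝ) :
    budanFourierV p x = budanFourierV (derivative p) x + negRight (p * derivative p) x := by
  have hdeg : p.natDegree ≠ 0 := fun h => hd (derivative_eq_zero.2 h)
  change signChanges (derivSeq p x) = signChanges (derivSeq (derivative p) x) + _
  rw [derivSeq_cons hdeg]
  by_cases hx : p.eval x = 0
  · rw [hx, signChanges_zero_cons, negRight_mul_derivative_of_root hd hx, add_zero]
  · obtain ⟨h, t, ht, hs⟩ := exists_filter_derivSeq hd x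
    rw [signChanges_cons hx ht]
    congr 1
    have hcont : ContinuousAt (fun y => p.eval x * p.eval y) x := by fun_prop
    have hpx : ∀ᶠ y in 𝓝[>] x, 0 < p.eval x * p.eval y :=
      (hcont.eventually_const_lt (mul_self_pos.2 hx)).filter_mono nhdsWithin_le_nhds
    have hprod : ∀ᶠ y in 𝓝[>] x, 0 < p.eval x * h * (p * derivative p).eval y := by
      filter_upwards [hs, hpx] with y h1 h2
      rw [eval_mul]; nlinarith [mul_pos h1 h2]
    exact (negRight_eq_ite hprod).symm

lemma budan_fourier_nat {p : ℝ[X]} (hp : p ≠ 0) {a b : ℝ} (hab : a < b) :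
    rootsIoc p a b + budanFourierV p b ≤ budanFourierV p a ∧
      Even (rootsIoc p a b + budanFourierV p b + budanFourierV p a) := by
  induction hn : p.natDegree generalizing p with
  | zero =>
    obtain ⟨c, rfl⟩ := natDegree_eq_zero.1 hn
    have hV : budanFourierV (C c) b = budanFourierV (C c) a := by simp [budanFourierV]
    simp [hV, rootsIoc]
  | succ n ih =>
    have hd : derivative p ≠ 0 := fun h => by
      rw [derivative_eq_zero] at h; omega
    obtain ⟨h1, h2⟩ := ih hd (by rw [natDegree_derivative]; omega)
    have h3 := rolle_Ioc hd hab
    have hpd := mul_ne_zero hp hd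
    have h4 := even_rootsIoc_add hpd hab.le
    rw [rootsIoc_mul hpd] at h4
    rw [budanFourierV_eq_add hd a, budanFourierV_eq_add hd b]
    exact ⟨by omega, by grind⟩

/-- **The Budan–Fourier theorem**: for a nonzero real polynomial `p` and reals `a < b`, the
number of roots of `p` in `(a, b]`, counted with multiplicity, is at most `V(a) − V(b)`, and
`V(a) − V(b)` minus this number of roots is even. -/
theorem budan_fourier (p : Polynomial ℝ) (hp : p ≠ 0) (a b : ℝ) (hab : a < b) :
    (Multiset.card (p.roots.filter fun x => a < x ∧ x ≤ b) : ℤ)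
        ≤ (budanFourierV p a : ℤ) - budanFourierV p b ∧
      Even ((budanFourierV p a : ℤ) - budanFourierV p b
        - Multiset.card (p.roots.filter fun x => a < x ∧ x ≤ b)) := by
  obtain ⟨h1, h2⟩ := budan_fourier_nat hp hab
  change (rootsIoc p a b : ℤ) ≤ _ ∧ Even (_ - (rootsIoc p a b : ℤ))
  refine ⟨by omega, ?_⟩
  rw [Nat.even_iff] at h2
  rw [Int.even_iff]
  omega
end

section
/- Let p be a nonzero polynomial with real coefficients. Then the number of strictly positive real roots of p, counted with multiplicity, is at most the number of sign changes in the sequence of coefficients of p, and these two quantities have the same parity (their difference is even). -/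
/-- The number of sign changes in the sequence of coefficients of a real polynomial `p`. -/
noncomputable def coeffSignChanges (p : Polynomial ℝ) : ℕ :=
  signChanges ((List.range (p.natDegree + 1)).map p.coeff)

open Polynomial

/-- The number of adjacent pairs of opposite signs in a list. Zero entries are not skipped, so this
is the number of sign changes only when the entries are nonzero. -/
noncomputable def adjChanges : List ℝ → ℕ
  | a :: b :: l => (if a * b < 0 then 1 else 0) + adjChanges (b :: l)
  | _ => 0

lemma length_filter_zip_tail (l : List ℝ) :
    ((l.zip l.tail).filter fun q => q.1 * q.2 < 0).length = adjChanges l := by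
  induction l with
  | nil => simp [adjChanges]
  | cons a l ih =>
    cases l with
    | nil => simp [adjChanges]
    | cons b l =>
      simp only [List.tail_cons] at ih
      simp only [List.tail_cons, List.zip_cons_cons, List.filter_cons, adjChanges, ← ih]
      split_ifs <;> simp_all [add_comm]

lemma adjChanges_append_pair (l : List ℝ) (a b : ℝ) :
    adjChanges (l ++ [a, b]) = adjChanges (l ++ [a]) + if a * b < 0 then 1 else 0 := by
  induction l with
  | nil => simp [adjChanges]
  | cons c l ih =>
    cases l with
    | nil => simp [adjChanges]
    | cons d l => simp_all [adjChanges, add_assoc]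

lemma adjChanges_reverse (l : List ℝ) : adjChanges l.reverse = adjChanges l := by
  induction l with
  | nil => rfl
  | cons a l ih =>
    cases l with
    | nil => rfl
    | cons b l =>
      have h := adjChanges_append_pair l.reverse b a
      simp only [List.reverse_cons, List.append_assoc, List.cons_append, List.nil_append] at ih h ⊢
      rw [h, ih, adjChanges, mul_comm, add_comm]

lemma sign_ne_sign_iff_mul_neg {a b : ℝ} (ha : a ≠ 0) (hb : b ≠ 0) :
    SignType.sign a ≠ SignType.sign b ↔ a * b < 0 := by
  rcases ha.lt_or_gt with ha | ha <;> rcases hb.lt_or_gt with hb | hb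
  · simp [ha, hb, (mul_pos_of_neg_of_neg ha hb).le]
  · simp [ha, hb, mul_neg_of_neg_of_pos ha hb]
  · simp [ha, hb, mul_neg_of_pos_of_neg ha hb]
  · simp [ha, hb, (mul_pos ha hb).le]

lemma length_destutter'_sign (a : ℝ) (l : List ℝ) (ha : a ≠ 0) (hl : ∀ x ∈ l, x ≠ 0) :
    ((l.map SignType.sign).destutter' (· ≠ ·) (SignType.sign a)).length =
      adjChanges (a :: l) + 1 := by
  induction l generalizing a with
  | nil => simp [adjChanges]
  | cons b l ih =>
    have hb : b ≠ 0 := hl b (by simp)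
    have ih := ih b hb fun x hx => hl x (by simp [hx])
    rw [List.map_cons, List.destutter'_cons, adjChanges]
    by_cases h : SignType.sign a ≠ SignType.sign b
    · rw [if_pos h, if_pos ((sign_ne_sign_iff_mul_neg ha hb).1 h), List.length_cons, ih]
      ring
    · rw [if_neg h, if_neg (mt (sign_ne_sign_iff_mul_neg ha hb).2 h), not_not.1 h, ih, zero_add]

lemma coeffSignChanges_eq_signVariations (p : ℝ[X]) (hp : p ≠ 0) :
    coeffSignChanges p = p.signVariations := by
  have hrev : p.coeffList = ((List.range (p.natDegree + 1)).map p.coeff).reverse := by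
    rw [coeffList, withBotSucc_degree_eq_natDegree_add_one hp, List.map_reverse]
  have hfilter (l : List ℝ) : (l.map SignType.sign).filter (· ≠ 0) =
      (l.filter (· ≠ 0)).map SignType.sign := by
    rw [List.filter_map]
    congr 2
    funext x
    simp [sign_eq_zero_iff]
  unfold coeffSignChanges signChanges signVariations
  simp only [length_filter_zip_tail]
  rw [← adjChanges_reverse, ← List.filter_reverse, ← hrev, hfilter]
  have hne : ∀ x ∈ p.coeffList.filter (· ≠ 0), x ≠ 0 := by simp
  generalize p.coeffList.filter (· ≠ 0) = l at hne
  cases l with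
  | nil => simp [adjChanges]
  | cons a l =>
    rw [List.map_cons, List.destutter_cons', length_destutter'_sign a l (hne a (by simp))
      fun x hx => hne x (by simp [hx])]
    simp

lemma trailingCoeff_eraseLead (p : ℝ[X]) (h : p.eraseLead ≠ 0) :
    p.eraseLead.trailingCoeff = p.trailingCoeff := by
  have hp : p ≠ 0 := by rintro rfl; simp at h
  set s := p.eraseLead.natTrailingDegree with hs
  set t := p.natTrailingDegree with ht
  have hs0 : p.eraseLead.coeff s ≠ 0 := trailingCoeff_nonzero_iff_nonzero.2 h
  have hsn : s ≠ p.natDegree := by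
    intro e
    rw [e] at hs0
    simp at hs0
  have hps : p.coeff s ≠ 0 := by rwa [eraseLead_coeff_of_ne _ hsn] at hs0
  have hts : t ≤ s := natTrailingDegree_le_of_ne_zero hps
  have htn : t ≠ p.natDegree := by
    have := le_natDegree_of_ne_zero hps
    omega
  have hst : s ≤ t := natTrailingDegree_le_of_ne_zero (by
    rw [eraseLead_coeff_of_ne _ htn]
    exact trailingCoeff_nonzero_iff_nonzero.2 hp)
  rw [trailingCoeff, trailingCoeff, ← hs, ← ht, le_antisymm hst hts, eraseLead_coeff_of_ne _ htn]

lemma neg_one_pow_signVariations_mul_pos (p : ℝ[X]) (hp : p ≠ 0) :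
    0 < (-1) ^ p.signVariations * (p.leadingCoeff * p.trailingCoeff) := by
  induction hd : p.support.card using Nat.strong_induction_on generalizing p with
  | _ d ih =>
  have hlead : p.leadingCoeff ≠ 0 := leadingCoeff_ne_zero.2 hp
  by_cases h : p.eraseLead = 0
  · obtain ⟨n, c, rfl⟩ : ∃ n c, p = monomial n c :=
      ⟨p.natDegree, p.leadingCoeff, by
        simpa [h] using (eraseLead_add_monomial_natDegree_leadingCoeff p).symm⟩
    have hc : c ≠ 0 := by rintro rfl; simp at hp
    simpa [trailingCoeff, natTrailingDegree_monomial hc] using mul_self_pos.2 hc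
  · have ih := ih _ (hd ▸ eraseLead_support_card_lt hp) p.eraseLead h rfl
    have hlead' : p.eraseLead.leadingCoeff ≠ 0 := leadingCoeff_ne_zero.2 h
    rw [trailingCoeff_eraseLead p h] at ih
    rw [signVariations_eq_eraseLead_add_ite hp]
    generalize p.eraseLead.leadingCoeff = b at *
    generalize p.leadingCoeff = a at *
    generalize p.trailingCoeff = c at *
    rw [pow_add]
    generalize (-1 : ℝ) ^ p.eraseLead.signVariations = e at *
    rcases hlead.lt_or_gt with ha | ha <;> rcases hlead'.lt_or_gt with hb | hb
    · simp only [sign_neg ha, sign_neg hb]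
      rw [if_neg (by decide)]
      nlinarith
    · simp only [sign_neg ha, sign_pos hb]
      rw [if_pos trivial]
      nlinarith
    · simp only [sign_pos ha, sign_neg hb]
      rw [if_pos (by decide)]
      nlinarith
    · simp only [sign_pos ha, sign_pos hb]
      rw [if_neg (by decide)]
      nlinarith

/-- If the end coefficients had opposite signs, the intermediate value theorem would give a root
between `0` and a point far to the right. -/
lemma coeff_zero_pos_of_forall_pos_not_isRoot (p : ℝ[X]) (h0 : p.coeff 0 ≠ 0)
    (hlead : 0 < p.leadingCoeff) (hroot : ∀ x, 0 < x → ¬ p.IsRoot x) : 0 < p.coeff 0 := by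
  by_contra hneg
  have hneg : p.coeff 0 < 0 := lt_of_le_of_ne (not_lt.1 hneg) h0
  have hdeg : 0 < p.degree := by
    by_contra hd
    rw [eq_C_of_degree_le_zero (not_lt.1 hd), leadingCoeff_C] at hlead
    linarith
  obtain ⟨y, hy, hy0⟩ := ((p.tendsto_atTop_of_leadingCoeff_nonneg hdeg hlead.le).eventually_gt_atTop
    0 |>.and (Filter.eventually_gt_atTop 0)).exists
  obtain ⟨x, hx, hx0⟩ := intermediate_value_Ioo hy0.le p.continuous.continuousOn
    (show (0 : ℝ) ∈ Set.Ioo (p.eval 0) (p.eval y) from ⟨by rwa [← coeff_zero_eq_eval_zero], hy⟩)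
  exact hroot x hx.1 hx0

lemma leadingCoeff_mul_trailingCoeff_pos (p : ℝ[X]) (hp : p ≠ 0)
    (hroot : ∀ x, 0 < x → ¬ p.IsRoot x) : 0 < p.leadingCoeff * p.trailingCoeff := by
  wlog hlead : 0 < p.leadingCoeff generalizing p with H
  · have hlt := lt_of_le_of_ne (not_lt.1 hlead) (leadingCoeff_ne_zero.2 hp)
    simpa [trailingCoeff] using H (-p) (neg_ne_zero.2 hp)
      (fun x hx h => hroot x hx (by simpa [IsRoot] using h)) (by simpa using hlt)
  -- Divide by the power of `X` that makes the trailing coefficient the constant one.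
  obtain ⟨q, hq⟩ := X_pow_dvd_iff.2 fun d hd => coeff_eq_zero_of_lt_natTrailingDegree (p := p) hd
  have hq0 : q.coeff 0 = p.trailingCoeff := by
    rw [trailingCoeff]
    conv_rhs => rw [hq]
    rw [coeff_X_pow_mul', if_pos]
    · rw [← hq]; simp
    · rw [← hq]
  have hql : q.leadingCoeff = p.leadingCoeff := by
    conv_rhs => rw [hq]
    simp
  rw [← hql] at hlead ⊢
  rw [← hq0]
  refine mul_pos hlead (coeff_zero_pos_of_forall_pos_not_isRoot q ?_ hlead fun x hx h => ?_)
  · rw [hq0]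
    exact trailingCoeff_nonzero_iff_nonzero.2 hp
  · refine hroot x hx ?_
    rw [hq]
    exact root_mul_left_of_isRoot _ h

lemma neg_one_pow_countP_roots_mul_pos (p : ℝ[X]) (hp : p ≠ 0) :
    0 < (-1) ^ p.roots.countP (0 < ·) * (p.leadingCoeff * p.trailingCoeff) := by
  induction hk : p.roots.countP (0 < ·) generalizing p with
  | zero =>
    rw [pow_zero, one_mul]
    refine leadingCoeff_mul_trailingCoeff_pos p hp fun x hx h => ?_
    exact Multiset.countP_eq_zero.1 hk x ((mem_roots hp).2 h) hx
  | succ k ih =>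
    obtain ⟨η, hroot, hη⟩ := Multiset.countP_pos.1 (hk ▸ k.succ_pos : 0 < p.roots.countP (0 < ·))
    obtain ⟨q, rfl⟩ := dvd_iff_isRoot.2 (isRoot_of_mem_roots hroot)
    have hkq : q.roots.countP (0 < ·) = k := by
      rw [roots_mul hp, roots_X_sub_C, Multiset.singleton_add, Multiset.countP_cons_of_pos _ hη] at hk
      exact Nat.succ_injective hk
    have hpos := mul_pos hη (ih q (right_ne_zero_of_mul hp) hkq)
    have htrail : (X - C η).trailingCoeff = -η := by
      have h0 : (X - C η).coeff 0 ≠ 0 := by simpa using hη.ne'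
      rw [trailingCoeff, natTrailingDegree_eq_zero.2 (Or.inr h0)]
      simp
    rw [leadingCoeff_mul, trailingCoeff_mul, htrail, leadingCoeff_X_sub_C]
    refine hpos.trans_eq ?_
    ring

/-- **Descartes' rule of signs**: for a nonzero real polynomial `p`, the number of strictly
positive real roots of `p`, counted with multiplicity, is at most the number of sign changes
in the sequence of coefficients of `p`, and the difference of the two quantities is even. -/
theorem descartes_rule_of_signs (p : Polynomial ℝ) (hp : p ≠ 0) :
    (Multiset.card (p.roots.filter fun x => 0 < x) : ℤ) ≤ coeffSignChanges p ∧
      Even ((coeffSignChanges p : ℤ) - Multiset.card (p.roots.filter fun x => 0 < x)) := by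
  rw [coeffSignChanges_eq_signVariations p hp, ← Multiset.countP_eq_card_filter]
  refine ⟨mod_cast roots_countP_pos_le_signVariations p, ?_⟩
  have hv := neg_one_pow_signVariations_mul_pos p hp
  have hr := neg_one_pow_countP_roots_mul_pos p hp
  rw [Int.even_sub, Int.even_coe_nat, Int.even_coe_nat]
  rcases Nat.even_or_odd p.signVariations with h₁ | h₁ <;>
    rcases Nat.even_or_odd (p.roots.countP (0 < ·)) with h₂ | h₂
  · exact iff_of_true h₁ h₂
  · rw [h₁.neg_one_pow] at hv
    rw [h₂.neg_one_pow] at hr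
    linarith
  · rw [h₁.neg_one_pow] at hv
    rw [h₂.neg_one_pow] at hr
    linarith
  · exact iff_of_false (Nat.not_even_iff_odd.2 h₁) (Nat.not_even_iff_odd.2 h₂)
end
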